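/- Let n ≡ s (mod 3) be a positive odd integer with s ∈ {1, −1}. Then, modulo Φ_n(−q)^3 Φ_n(q)^2, one has Σ_{k=0}^{(n−s)/3} (−1)^k · (1+q^{6k+s})(q^{2s};q^6)_k^3 / ((1+q^s)(q^6;q^6)_k^3) · q^{3k^2+2k(3−s)} ≡ (−1)^{(n−s)/3} · ([n]_{q^2}/[s]_{q^2}) · q^{(n−s)(n+s−3)/3} · Σ_{k=0}^{(n−s)/3} (q^{2s};q^6)_k^2 (q^3;q^6)_k / ((q^6, q^{3+s}, q^{6+s}; q^6)_k) · q^{2k(3−s)}. -/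

import Mathlib

open Finset Polynomial

/-- The q-shifted factorial `(x; q)_k = ∏_{j=0}^{k-1} (1 - x q^j)`. -/
noncomputable def qPoch (x q : RatFunc ℚ) (k : ℕ) : RatFunc ℚ :=
  ∏ j ∈ Finset.range k, (1 - x * q ^ j)

/-- The q-integer `[m]_q = (1 - q^m)/(1 - q)` (with integer `m`). -/
noncomputable def qInt (q : RatFunc ℚ) (m : ℤ) : RatFunc ℚ :=
  (1 - q ^ m) / (1 - q)


def qp {R : Type*} [CommRing R] (x q : R) (k : ℕ) : R := ∏ j ∈ Finset.range k, (1 - x * q ^ j)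

section qpl
variable {R : Type*} [CommRing R]
lemma qp_zero (x q : R) : qp x q 0 = 1 := by simp [qp]
lemma qp_succ (x q : R) (k : ℕ) : qp x q (k+1) = qp x q k * (1 - x * q ^ k) := by
  simp [qp, Finset.prod_range_succ]
lemma qp_add (x q : R) (j m : ℕ) : qp x q (j+m) = qp x q j * qp (x * q ^ j) q m := by
  simp only [qp, Finset.prod_range_add]
  congr 1
  refine Finset.prod_congr rfl fun i _ => ?_
  rw [pow_add]; ring
lemma qp_succ' (x q : R) (k : ℕ) : qp x q (k+1) = (1 - x) * qp (x * q) q k := by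
  rw [add_comm k 1, qp_add]; simp [qp]
end qpl

section fieldid
variable {K : Type*} [Field K]

lemma qp_ne_zero {x q : K} {k : ℕ} (h : ∀ j < k, 1 - x * q ^ j ≠ 0) : qp x q k ≠ 0 :=
  Finset.prod_ne_zero_iff.mpr fun j hj => h j (Finset.mem_range.mp hj)

lemma qp_inv_eq_zero {q : K} (hq : q ≠ 0) {N k : ℕ} (h : N < k) : qp ((q ^ N)⁻¹) q k = 0 :=
  Finset.prod_eq_zero (Finset.mem_range.mpr h) (by
    rw [inv_mul_cancel₀ (pow_ne_zero _ hq), sub_self])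

/-- Telescoped partial sums for the special q-Saalschütz sum. -/
lemma saal_partial (p r t : K) (hp : p ≠ 0) (ht : t ≠ 0)
    (h1 : ∀ j : ℕ, 1 - p ^ 2 * (p ^ 2) ^ j ≠ 0) (h2 : ∀ j : ℕ, 1 - r * p ^ 2 * (p ^ 2) ^ j ≠ 0)
    (h3 : ∀ j : ℕ, 1 - r * p * (p ^ 2) ^ j ≠ 0) (J : ℕ) :
    ∑ j ∈ range (J + 1),
      (qp (t * p ^ 2)⁻¹ (p ^ 2) j * qp (r ^ 2 * t * p ^ 2) (p ^ 2) j *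
          (qp p (p ^ 2) j / (qp (p ^ 2) (p ^ 2) j * qp (r * p ^ 2) (p ^ 2) j * qp (r * p) (p ^ 2) j))
          * (p ^ 2) ^ j * (1 - r * t * p ^ 2)
        - qp t⁻¹ (p ^ 2) j * qp (r ^ 2 * t) (p ^ 2) j *
          (qp p (p ^ 2) j / (qp (p ^ 2) (p ^ 2) j * qp (r * p ^ 2) (p ^ 2) j * qp (r * p) (p ^ 2) j))
          * (p ^ 2) ^ j * (p * (1 - r * t)))
      = (1 + r * p * t) * (qp t⁻¹ (p ^ 2) J * qp (r ^ 2 * t * p ^ 2) (p ^ 2) J * qp p (p ^ 2) (J + 1) /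
          (qp (p ^ 2) (p ^ 2) J * qp (r * p ^ 2) (p ^ 2) J * qp (r * p) (p ^ 2) J)) := by
  induction J with
  | zero => simp [qp]; ring
  | succ J ih =>
    rw [Finset.sum_range_succ, ih]
    have e1 : qp (t * p ^ 2)⁻¹ (p ^ 2) (J + 1) = (1 - (t * p ^ 2)⁻¹) * qp t⁻¹ (p ^ 2) J := by
      rw [qp_succ']; congr 2; field_simp
    have e2 : qp (r ^ 2 * t) (p ^ 2) (J + 1) = (1 - r ^ 2 * t) * qp (r ^ 2 * t * p ^ 2) (p ^ 2) J := by
      rw [qp_succ']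
    rw [e1, e2]
    have n1 := h1 J
    have n2 := h2 J
    have n3 := h3 J
    have m1 : qp (p ^ 2) (p ^ 2) J ≠ 0 := qp_ne_zero fun j _ => h1 j
    have m2 : qp (r * p ^ 2) (p ^ 2) J ≠ 0 := qp_ne_zero fun j _ => h2 j
    have m3 : qp (r * p) (p ^ 2) J ≠ 0 := qp_ne_zero fun j _ => h3 j
    simp only [qp_succ]
    simp only [pow_succ (p ^ 2) J]
    generalize qp (p ^ 2) (p ^ 2) J = a1 at *
    generalize qp (r * p ^ 2) (p ^ 2) J = a2 at *
    generalize qp (r * p) (p ^ 2) J = a3 at *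
    generalize qp p (p ^ 2) J = a4 at *
    generalize qp t⁻¹ (p ^ 2) J = a5 at *
    generalize qp (r ^ 2 * t * p ^ 2) (p ^ 2) J = a6 at *
    generalize (p ^ 2) ^ J = x at *
    clear ih h1 h2 h3 e1 e2
    field_simp
    ring

lemma saal (p r : K) (hp : p ≠ 0)
    (h1 : ∀ j : ℕ, 1 - p ^ 2 * (p ^ 2) ^ j ≠ 0) (h2 : ∀ j : ℕ, 1 - r * p ^ 2 * (p ^ 2) ^ j ≠ 0)
    (h3 : ∀ j : ℕ, 1 - r * p * (p ^ 2) ^ j ≠ 0) (k : ℕ) :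
    (∑ j ∈ range (k + 1), qp ((p ^ 2) ^ k)⁻¹ (p ^ 2) j * qp (r ^ 2 * (p ^ 2) ^ k) (p ^ 2) j *
          (qp p (p ^ 2) j / (qp (p ^ 2) (p ^ 2) j * qp (r * p ^ 2) (p ^ 2) j * qp (r * p) (p ^ 2) j))
          * (p ^ 2) ^ j) * (1 - r * (p ^ 2) ^ k) = p ^ k * (1 - r) := by
  induction k with
  | zero => simp [qp]
  | succ k ih =>
    have hq : p ^ 2 ≠ 0 := pow_ne_zero _ hp
    have := saal_partial p r ((p ^ 2) ^ k) hp (pow_ne_zero _ hq) h1 h2 h3 (k + 1)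
    rw [qp_inv_eq_zero hq (Nat.lt_succ_self k), Finset.sum_sub_distrib, ← Finset.sum_mul,
      ← Finset.sum_mul] at this
    rw [Finset.sum_range_succ _ (k+1), Finset.sum_range_succ (n := k + 1) (f := fun j => qp ((p ^ 2) ^ k)⁻¹ (p ^ 2) j * _ * _ * _),
      qp_inv_eq_zero hq (Nat.lt_succ_self k)] at this
    rw [pow_succ (p ^ 2) k, Finset.sum_range_succ]
    rw [← mul_assoc (r ^ 2), ← mul_assoc r, pow_succ p k]
    linear_combination this + p * ih

/-- Telescoped partial sums for the limiting 6φ5 sum. -/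
lemma six_partial (Q A E t : K) (hQ : Q ≠ 0) (ht : t ≠ 0) (hE : E ≠ 0) (hA : 1 - A ≠ 0)
    (n : ℕ) (h1 : ∀ j : ℕ, 1 - Q * Q ^ j ≠ 0) (h2 : ∀ j < n, 1 - A * Q / E * Q ^ j ≠ 0)
    (h3 : ∀ j : ℕ, 1 - A * Q * t * Q ^ j ≠ 0) (T : ℕ → K) (hT0 : T 0 = 1)
    (hT : ∀ m, T (m + 1) = T m * (- Q ^ m)) (J : ℕ) (hJ : J ≤ n) :
    ∑ m ∈ range (J + 1),
      ((1 - A * Q * t / E) * ((1 - A * Q ^ (2 * m)) / (1 - A) * (qp A Q m * qp E Q m * qp (t * Q)⁻¹ Q m /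
          (qp Q Q m * qp (A * Q / E) Q m * qp (A * Q * (t * Q)) Q m)) * T m * (A * Q * (t * Q) / E) ^ m)
       - (1 - A * Q * t) * ((1 - A * Q ^ (2 * m)) / (1 - A) * (qp A Q m * qp E Q m * qp t⁻¹ Q m /
          (qp Q Q m * qp (A * Q / E) Q m * qp (A * Q * t) Q m)) * T m * (A * Q * t / E) ^ m))
      = (1 - A * Q * t) * (1 / (1 - A) * (qp A Q (J + 1) * qp E Q (J + 1) * qp t⁻¹ Q J /
          (qp Q Q J * qp (A * Q / E) Q J * qp (A * Q * t) Q (J + 1))) * T (J + 1) * (A * Q * t / E) ^ (J + 1)) := by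
  induction J with
  | zero =>
    have := h3 0
    simp [qp, hT, hT0] at this ⊢
    field_simp
    ring
  | succ J ih =>
    rw [Finset.sum_range_succ, ih (by omega)]
    have e1 : qp (t * Q)⁻¹ Q (J + 1) = (1 - (t * Q)⁻¹) * qp t⁻¹ Q J := by
      rw [qp_succ']; congr 2; field_simp
    have e2 : qp (A * Q * (t * Q)) Q (J + 1) = qp (A * Q * t) Q (J + 1) * (1 - A * Q * t * Q ^ (J + 1)) / (1 - A * Q * t) := by
      have n0 := h3 0
      rw [pow_zero, mul_one] at n0
      rw [eq_div_iff n0, ← qp_succ, qp_succ' _ _ (J + 1), mul_comm]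
      congr 2; ring
    have e3 : (A * Q * (t * Q) / E) ^ (J + 1) = (A * Q * t / E) ^ (J + 1) * Q ^ (J + 1) := by
      rw [← mul_pow]; congr 1; ring
    rw [e1, e2, e3, hT (J + 1)]
    have n0 := h3 0
    rw [pow_zero, mul_one] at n0
    have n1 := h1 J
    have n2 := h2 J (by omega)
    have n3 := h3 J
    have n4 := h3 (J + 1)
    have m1 : qp Q Q J ≠ 0 := qp_ne_zero fun j _ => h1 j
    have m2 : qp (A * Q / E) Q J ≠ 0 := qp_ne_zero fun j hj => h2 j (by omega)
    have m3 : qp (A * Q * t) Q J ≠ 0 := qp_ne_zero fun j _ => h3 j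
    have q2 : Q ^ (2 * (J + 1)) = (Q ^ J) ^ 2 * Q ^ 2 := by ring
    rw [q2]
    simp only [qp_succ, pow_succ (A * Q * t / E)]
    simp only [pow_succ Q J] at n4 ⊢
    generalize qp Q Q J = a1 at *
    generalize qp (A * Q / E) Q J = a2 at *
    generalize qp (A * Q * t) Q J = a3 at *
    generalize qp A Q J = a4 at *
    generalize qp t⁻¹ Q J = a5 at *
    generalize qp E Q J = a6 at *
    generalize (A * Q * t / E) ^ J = a7 at *
    generalize T (J + 1) = a8 at *
    generalize Q ^ J = x at *
    clear ih h1 h2 h3 e1 e2 e3 q2 hT hT0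
    have n2' : E - A * Q * x ≠ 0 := by
      intro h; apply n2; field_simp; linear_combination h
    have n2'' : 1 - A * Q / E * x = (E - A * Q * x) / E := by field_simp
    rw [n2'']
    have n4' : 1 - A * Q ^ 2 * t * x ≠ 0 := by
      intro h; apply n4; linear_combination h
    have n4'' : 1 - A * Q * t * (x * Q) = 1 - A * Q ^ 2 * t * x := by ring
    rw [n4'']
    clear n2 n2'' n4 n4''
    field_simp
    ring

lemma six (Q A E : K) (hQ : Q ≠ 0) (hE : E ≠ 0) (hA : 1 - A ≠ 0)
    (n : ℕ) (h1 : ∀ j : ℕ, 1 - Q * Q ^ j ≠ 0) (h2 : ∀ j < n, 1 - A * Q / E * Q ^ j ≠ 0)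
    (h3 : ∀ j : ℕ, 1 - A * Q * Q ^ j ≠ 0) (T : ℕ → K) (hT0 : T 0 = 1)
    (hT : ∀ m, T (m + 1) = T m * (- Q ^ m)) (M : ℕ) (hM : M ≤ n) :
    ∑ m ∈ range (M + 1),
      ((1 - A * Q ^ (2 * m)) / (1 - A) * (qp A Q m * qp E Q m * qp (Q ^ M)⁻¹ Q m /
          (qp Q Q m * qp (A * Q / E) Q m * qp (A * Q * Q ^ M) Q m)) * T m * (A * Q * Q ^ M / E) ^ m)
      = qp (A * Q) Q M / qp (A * Q / E) Q M := by
  induction M with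
  | zero => simp [qp, hT0, hA]
  | succ M ih =>
    have := six_partial Q A E (Q ^ M) hQ (pow_ne_zero _ hQ) hE hA n h1 h2 (fun j => by
      have := h3 (M + j); rwa [pow_add, ← mul_assoc] at this) T hT0 hT (M + 1) hM
    rw [qp_inv_eq_zero hQ (Nat.lt_succ_self M), Finset.sum_sub_distrib, ← Finset.mul_sum,
      ← Finset.mul_sum, Finset.sum_range_succ (n := M + 1) (f := fun m => _ / _ * (_ * qp (Q ^ M)⁻¹ Q m / _) * _ * _),
      ih (by omega), qp_inv_eq_zero hQ (Nat.lt_succ_self M)] at this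
    have n2 := h2 M (by omega)
    have n2' : 1 - A * Q * Q ^ M / E ≠ 0 := by convert n2 using 2; ring
    have m2 : qp (A * Q / E) Q M ≠ 0 := qp_ne_zero fun j hj => h2 j (by omega)
    rw [← pow_succ] at this
    rw [qp_succ, qp_succ, eq_div_iff (mul_ne_zero m2 n2)]
    have e : A * Q / E * Q ^ M = A * Q * Q ^ M / E := by ring
    rw [e]
    have h5 : qp (A * Q) Q M = qp (A * Q) Q M / qp (A * Q / E) Q M * qp (A * Q / E) Q M := by
      field_simp
    rw [h5]
    generalize qp (A * Q) Q M / qp (A * Q / E) Q M = z at *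
    linear_combination (qp (A * Q / E) Q M) * this
end fieldid

section watson
variable {K : Type*} [Field K]

lemma T_flip (Q : K) (hQ : Q ≠ 0) (T : ℕ → K) (hT : ∀ m, T (m + 1) = T m * (- Q ^ m)) (j m : ℕ) :
    qp (Q ^ (j + m))⁻¹ Q j * qp Q Q m * T (j + m) * Q ^ j = T m * qp Q Q (j + m) := by
  induction j with
  | zero => simp [qp]; ring
  | succ j ih =>
    have e0 : j + 1 + m = j + m + 1 := by ring
    rw [e0, qp_succ', hT, qp_succ]
    have e1 : (Q ^ (j + m + 1))⁻¹ * Q = (Q ^ (j + m))⁻¹ := by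
      rw [pow_succ]; field_simp
    rw [e1, ← mul_assoc, ← mul_assoc (T m), ← ih, pow_succ Q j]
    have e2 : (1 - (Q ^ (j + m + 1))⁻¹) * (-Q ^ (j + m)) * Q = 1 - Q * Q ^ (j + m) := by
      rw [pow_succ]; field_simp; ring
    rw [← e2]; ring

lemma sum_triangle (N : ℕ) (f : ℕ → ℕ → K) :
    ∑ k ∈ range (N + 1), ∑ j ∈ range (k + 1), f k j
      = ∑ j ∈ range (N + 1), ∑ m ∈ range (N - j + 1), f (j + m) j := by
  rw [Finset.sum_sigma', Finset.sum_sigma']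
  refine Finset.sum_bij' (fun x _ => ⟨x.2, x.1 - x.2⟩) (fun x _ => ⟨x.1 + x.2, x.1⟩) ?_ ?_ ?_ ?_ ?_
  · rintro ⟨k, j⟩ h
    simp only [Finset.mem_sigma, Finset.mem_range] at h ⊢
    omega
  · rintro ⟨k, j⟩ h
    simp only [Finset.mem_sigma, Finset.mem_range] at h ⊢
    omega
  · rintro ⟨k, j⟩ h
    simp only [Finset.mem_sigma, Finset.mem_range] at h
    have : j + (k - j) = k := by omega
    simp [this]
  · rintro ⟨k, j⟩ h
    simp
  · rintro ⟨k, j⟩ h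
    simp only [Finset.mem_sigma, Finset.mem_range] at h
    have : j + (k - j) = k := by omega
    simp [this]

lemma watson_term (Q a e : K) (hQ : Q ≠ 0) (he : e ≠ 0) (T : ℕ → K)
    (hT : ∀ m, T (m + 1) = T m * (- Q ^ m)) (j m M N : ℕ) (hN : N = j + M) (hm : m ≤ M)
    (h1 : ∀ j : ℕ, 1 - Q * Q ^ j ≠ 0) (ha : ∀ j : ℕ, 1 - a * Q ^ j ≠ 0)
    (h2 : ∀ j < N, 1 - a * Q / e * Q ^ j ≠ 0) :
    ((1 - a * Q ^ (2 * (j + m))) / (1 - a) *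
      (qp a Q (j + m) * qp e Q (j + m) * qp (Q ^ N)⁻¹ Q (j + m) /
        (qp Q Q (j + m) * qp (a * Q / e) Q (j + m) * qp (a * Q * Q ^ N) Q (j + m))) * T (j + m) *
        (a * Q * Q ^ N / e) ^ (j + m)) *
      (qp (Q ^ (j + m))⁻¹ Q j * qp (a * Q ^ (j + m)) Q j * Q ^ j) =
    qp e Q j * qp (Q ^ N)⁻¹ Q j * (a * Q * Q ^ N / e) ^ j * (qp (a * Q) Q N / qp (a * Q / e) Q N) *
      (((1 - (a * Q ^ (2 * j)) * Q ^ (2 * m)) / (1 - (a * Q ^ (2 * j))) *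
        (qp (a * Q ^ (2 * j)) Q m * qp (e * Q ^ j) Q m * qp (Q ^ M)⁻¹ Q m /
          (qp Q Q m * qp ((a * Q ^ (2 * j)) * Q / (e * Q ^ j)) Q m * qp ((a * Q ^ (2 * j)) * Q * Q ^ M) Q m))
          * T m * ((a * Q ^ (2 * j)) * Q * Q ^ M / (e * Q ^ j)) ^ m)
       * (qp ((a * Q ^ (2 * j)) * Q / (e * Q ^ j)) Q M / qp ((a * Q ^ (2 * j)) * Q) Q M)) := by
  have f1 := T_flip Q hQ T hT j m
  have f2 : qp a Q (j + m) * qp (a * Q ^ (j + m)) Q j = qp a Q (2 * j) * qp (a * Q ^ (2 * j)) Q m := by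
    rw [← qp_add, ← qp_add]; congr 1; ring
  have f3 : qp a Q (2 * j) * (1 - a * Q ^ (2 * j)) * qp ((a * Q ^ (2 * j)) * Q) Q M
      = (1 - a) * qp (a * Q) Q N * qp (a * Q * Q ^ N) Q j := by
    have e0 : a * Q ^ (2 * j) * Q = a * Q ^ (2 * j + 1) := by ring
    rw [← qp_succ, e0, ← qp_add, mul_assoc, ← qp_add]
    have e9 : 2 * j + 1 + M = N + j + 1 := by omega
    rw [e9, qp_succ']
  have g1 : a * Q ^ (2 * j) * Q / (e * Q ^ j) = a * Q / e * Q ^ j := by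
    rw [two_mul, pow_add]; field_simp
  have g2 : a * Q ^ (2 * j) * Q * Q ^ M = a * Q * Q ^ N * Q ^ j := by
    rw [hN]; ring
  have g3 : a * Q ^ (2 * j) * Q * Q ^ M / (e * Q ^ j) = a * Q * Q ^ N / e := by
    rw [g2]; field_simp
  have g4 : (Q ^ M)⁻¹ = (Q ^ N)⁻¹ * Q ^ j := by
    rw [hN, pow_add]; field_simp
  have g5 : qp (a * Q / e) Q N = qp (a * Q / e) Q j * qp (a * Q / e * Q ^ j) Q M := by
    rw [hN, qp_add]
  rw [g3, g1, g2, g4, g5]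
  have k1 : qp Q Q m ≠ 0 := qp_ne_zero fun i _ => h1 i
  have k2 : qp Q Q (j + m) ≠ 0 := qp_ne_zero fun i _ => h1 i
  have k3 : qp (a * Q / e) Q j ≠ 0 := qp_ne_zero fun i hi => h2 i (by omega)
  have shift : ∀ s i, 1 - a * Q / e * Q ^ s * Q ^ i = 1 - a * Q / e * Q ^ (s + i) := by
    intro s i; rw [pow_add]; ring
  have shift' : ∀ s i, 1 - a * Q * Q ^ s * Q ^ i = 1 - a * Q ^ (1 + s + i) := by
    intro s i; rw [pow_add, pow_add]; ring
  have k4 : qp (a * Q / e * Q ^ j) Q m ≠ 0 := qp_ne_zero fun i hi => by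
    rw [shift]; exact h2 _ (by omega)
  have k5 : qp (a * Q / e * Q ^ j) Q M ≠ 0 := qp_ne_zero fun i hi => by
    rw [shift]; exact h2 _ (by omega)
  have k6 : qp (a * Q * Q ^ N) Q j ≠ 0 := qp_ne_zero fun i hi => by
    rw [shift']; exact ha _
  have k7 : qp (a * Q * Q ^ N * Q ^ j) Q m ≠ 0 := qp_ne_zero fun i hi => by
    have : a * Q * Q ^ N * Q ^ j = a * Q * Q ^ (N + j) := by rw [pow_add]; ring
    rw [this, shift']; exact ha _
  have k8 : qp (a * Q ^ (2 * j) * Q) Q M ≠ 0 := qp_ne_zero fun i hi => by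
    have : a * Q ^ (2 * j) * Q = a * Q * Q ^ (2 * j) := by ring
    rw [this, shift']; exact ha _
  have k9 : 1 - a * Q ^ (2 * j) ≠ 0 := ha _
  have k10 : 1 - a ≠ 0 := by simpa using ha 0
  have f1' : qp (Q ^ (j + m))⁻¹ Q j * T (j + m) * Q ^ j / qp Q Q (j + m) = T m / qp Q Q m := by
    rw [div_eq_div_iff k2 k1]; linear_combination f1
  have f3' : qp (a * Q) Q N / qp ((a * Q ^ (2 * j)) * Q) Q M / (1 - a * Q ^ (2 * j))
      = qp a Q (2 * j) / (1 - a) / qp (a * Q * Q ^ N) Q j := by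
    rw [div_div, div_div, div_eq_div_iff (mul_ne_zero k8 k9) (mul_ne_zero k10 k6)]
    linear_combination -f3
  have e1 : Q ^ (2 * (j + m)) = Q ^ (2 * j) * Q ^ (2 * m) := by ring
  rw [qp_add e, qp_add (Q ^ N)⁻¹, qp_add (a * Q / e), qp_add (a * Q * Q ^ N), e1,
    pow_add (a * Q * Q ^ N / e)]
  calc _ = (qp a Q (j + m) * qp (a * Q ^ (j + m)) Q j) *
        (qp (Q ^ (j + m))⁻¹ Q j * T (j + m) * Q ^ j / qp Q Q (j + m)) *
        ((1 - a * (Q ^ (2 * j) * Q ^ (2 * m))) / (1 - a) * (qp e Q j * qp (e * Q ^ j) Q m *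
          (qp (Q ^ N)⁻¹ Q j * qp ((Q ^ N)⁻¹ * Q ^ j) Q m) /
          (qp (a * Q / e) Q j * qp (a * Q / e * Q ^ j) Q m *
            (qp (a * Q * Q ^ N) Q j * qp (a * Q * Q ^ N * Q ^ j) Q m))) *
          ((a * Q * Q ^ N / e) ^ j * (a * Q * Q ^ N / e) ^ m)) := by
        generalize (a * Q * Q ^ N / e) ^ j = z1
        generalize (a * Q * Q ^ N / e) ^ m = z2
        generalize 1 - a * (Q ^ (2 * j) * Q ^ (2 * m)) = z3
        simp only [div_eq_mul_inv, mul_inv]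
        ring
    _ = (qp a Q (2 * j) / (1 - a) / qp (a * Q * Q ^ N) Q j) * qp (a * Q ^ (2 * j)) Q m *
        (T m / qp Q Q m) *
        ((1 - a * (Q ^ (2 * j) * Q ^ (2 * m))) * (qp e Q j * qp (e * Q ^ j) Q m *
          (qp (Q ^ N)⁻¹ Q j * qp ((Q ^ N)⁻¹ * Q ^ j) Q m) /
          (qp (a * Q / e) Q j * qp (a * Q / e * Q ^ j) Q m *
            (qp (a * Q * Q ^ N * Q ^ j) Q m))) *
          ((a * Q * Q ^ N / e) ^ j * (a * Q * Q ^ N / e) ^ m)) := by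
        rw [f1', f2]
        generalize (a * Q * Q ^ N / e) ^ j = z1
        generalize (a * Q * Q ^ N / e) ^ m = z2
        generalize 1 - a * (Q ^ (2 * j) * Q ^ (2 * m)) = z3
        generalize 1 - a = z4
        simp only [div_eq_mul_inv, mul_inv]
        ring
    _ = _ := by
        rw [← f3', ← mul_assoc a (Q ^ (2 * j)) (Q ^ (2 * m))]
        generalize (a * Q * Q ^ N / e) ^ j = z1
        generalize (a * Q * Q ^ N / e) ^ m = z2
        generalize 1 - a * Q ^ (2 * j) * Q ^ (2 * m) = z3
        generalize 1 - a * Q ^ (2 * j) = z4 at *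
        generalize qp (a * Q / e * Q ^ j) Q M = z5 at *
        have : z5 * z5⁻¹ = 1 := mul_inv_cancel₀ k5
        simp only [div_eq_mul_inv, mul_inv]
        linear_combination (-1) * (qp e Q j * qp (Q ^ N)⁻¹ Q j * z1 * qp (a * Q) Q N * (qp (a * Q * e⁻¹) Q j)⁻¹
          * z3 * z4⁻¹ * qp (a * Q ^ (2 * j)) Q m * qp (e * Q ^ j) Q m * qp ((Q ^ N)⁻¹ * Q ^ j) Q m
          * (qp Q Q m)⁻¹ * (qp (a * Q * e⁻¹ * Q ^ j) Q m)⁻¹ * (qp (a * Q * Q ^ N * Q ^ j) Q m)⁻¹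
          * T m * z2 * (qp (a * Q ^ (2 * j) * Q) Q M)⁻¹) * this

lemma watson (p r e : K) (hp : p ≠ 0) (he : e ≠ 0) (T : ℕ → K) (hT0 : T 0 = 1)
    (hT : ∀ m, T (m + 1) = T m * (- (p ^ 2) ^ m)) (N : ℕ)
    (h1 : ∀ j : ℕ, 1 - p ^ 2 * (p ^ 2) ^ j ≠ 0) (ha : ∀ j : ℕ, 1 - r ^ 2 * (p ^ 2) ^ j ≠ 0)
    (h2 : ∀ j < N, 1 - r ^ 2 * p ^ 2 / e * (p ^ 2) ^ j ≠ 0) :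
    ∑ k ∈ range (N + 1), (1 + r * (p ^ 2) ^ k) / (1 + r) *
      (qp (r ^ 2) (p ^ 2) k * qp e (p ^ 2) k * qp ((p ^ 2) ^ N)⁻¹ (p ^ 2) k /
        (qp (p ^ 2) (p ^ 2) k * qp (r ^ 2 * p ^ 2 / e) (p ^ 2) k * qp (r ^ 2 * p ^ 2 * (p ^ 2) ^ N) (p ^ 2) k))
      * T k * (r ^ 2 * p ^ 2 * (p ^ 2) ^ N / e) ^ k * p ^ k
    = qp (r ^ 2 * p ^ 2) (p ^ 2) N / qp (r ^ 2 * p ^ 2 / e) (p ^ 2) N *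
      ∑ j ∈ range (N + 1), (qp p (p ^ 2) j / (qp (p ^ 2) (p ^ 2) j * qp (r * p ^ 2) (p ^ 2) j * qp (r * p) (p ^ 2) j))
       * (qp e (p ^ 2) j * qp ((p ^ 2) ^ N)⁻¹ (p ^ 2) j * (r ^ 2 * p ^ 2 * (p ^ 2) ^ N / e) ^ j) := by
  have hQ : p ^ 2 ≠ 0 := pow_ne_zero _ hp
  have s2 : ∀ j : ℕ, 1 - r * p ^ j ≠ 0 ∧ 1 + r * p ^ j ≠ 0 := by
    intro j
    rw [← mul_ne_zero_iff]
    have := ha j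
    convert this using 1; rw [← pow_mul, mul_comm 2 j, pow_mul]; ring
  have hr := (s2 0).1
  have hr' := (s2 0).2
  rw [pow_zero, mul_one] at hr hr'
  have b2 : ∀ j : ℕ, 1 - r * (p ^ 2) ^ j ≠ 0 := by
    intro j; rw [← pow_mul]; exact (s2 _).1
  have b3 : ∀ j : ℕ, 1 - r * p ^ 2 * (p ^ 2) ^ j ≠ 0 := by
    intro j; rw [mul_assoc, ← pow_succ']; exact b2 _
  have b4 : ∀ j : ℕ, 1 - r * p * (p ^ 2) ^ j ≠ 0 := by
    intro j; rw [mul_assoc, ← pow_mul, ← pow_succ']; exact (s2 _).1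
  set β : ℕ → K := fun j => qp p (p ^ 2) j / (qp (p ^ 2) (p ^ 2) j * qp (r * p ^ 2) (p ^ 2) j * qp (r * p) (p ^ 2) j) with hβ
  set W : ℕ → K := fun k => (1 - r ^ 2 * (p ^ 2) ^ (2 * k)) / (1 - r ^ 2) *
      (qp (r ^ 2) (p ^ 2) k * qp e (p ^ 2) k * qp ((p ^ 2) ^ N)⁻¹ (p ^ 2) k /
        (qp (p ^ 2) (p ^ 2) k * qp (r ^ 2 * p ^ 2 / e) (p ^ 2) k * qp (r ^ 2 * p ^ 2 * (p ^ 2) ^ N) (p ^ 2) k))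
      * T k * (r ^ 2 * p ^ 2 * (p ^ 2) ^ N / e) ^ k with hW
  set Y : ℕ → ℕ → K := fun k j => qp ((p ^ 2) ^ k)⁻¹ (p ^ 2) j * qp (r ^ 2 * (p ^ 2) ^ k) (p ^ 2) j * (p ^ 2) ^ j with hY
  have step1 : ∀ k, (1 + r * (p ^ 2) ^ k) / (1 + r) *
      (qp (r ^ 2) (p ^ 2) k * qp e (p ^ 2) k * qp ((p ^ 2) ^ N)⁻¹ (p ^ 2) k /
        (qp (p ^ 2) (p ^ 2) k * qp (r ^ 2 * p ^ 2 / e) (p ^ 2) k * qp (r ^ 2 * p ^ 2 * (p ^ 2) ^ N) (p ^ 2) k))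
      * T k * (r ^ 2 * p ^ 2 * (p ^ 2) ^ N / e) ^ k * p ^ k = ∑ j ∈ range (k + 1), β j * (W k * Y k j) := by
    intro k
    have hs := saal p r hp h1 b3 b4 k
    have hs' : ∑ j ∈ range (k + 1), β j * Y k j = p ^ k * (1 - r) / (1 - r * (p ^ 2) ^ k) := by
      rw [eq_div_iff (b2 k), ← hs]; congr 1
      refine Finset.sum_congr rfl fun j _ => ?_
      simp only [hβ, hY]; ring
    have : ∑ j ∈ range (k + 1), β j * (W k * Y k j) = W k * ∑ j ∈ range (k + 1), β j * Y k j := by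
      rw [Finset.mul_sum]; exact Finset.sum_congr rfl fun j _ => by ring
    rw [this, hs']
    simp only [hW]
    have c1 : (1 - r ^ 2 * (p ^ 2) ^ (2 * k)) / (1 - r ^ 2) * ((1 - r) / (1 - r * (p ^ 2) ^ k))
        = (1 + r * (p ^ 2) ^ k) / (1 + r) := by
      have d1 : 1 - r ^ 2 * (p ^ 2) ^ (2 * k) = (1 - r * (p ^ 2) ^ k) * (1 + r * (p ^ 2) ^ k) := by
        rw [mul_comm 2 k, pow_mul _ k 2]; ring
      have d2 : 1 - r ^ 2 = (1 - r) * (1 + r) := by ring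
      have := b2 k
      rw [d1, d2]
      field_simp
    rw [← c1]; ring
  have step2 : ∀ j ∈ range (N + 1), ∑ m ∈ range (N - j + 1), W (j + m) * Y (j + m) j
      = qp (r ^ 2 * p ^ 2) (p ^ 2) N / qp (r ^ 2 * p ^ 2 / e) (p ^ 2) N *
        (qp e (p ^ 2) j * qp ((p ^ 2) ^ N)⁻¹ (p ^ 2) j * (r ^ 2 * p ^ 2 * (p ^ 2) ^ N / e) ^ j) := by
    intro j hj
    have hj' : j ≤ N := Nat.lt_succ_iff.mp (Finset.mem_range.mp hj)
    have hk : ∀ m ∈ range (N - j + 1), _ := fun m hm =>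
      watson_term (p ^ 2) (r ^ 2) e hQ he T hT j m (N - j) N (by omega)
        (Nat.lt_succ_iff.mp (Finset.mem_range.mp hm)) h1 ha h2
    simp only [hW, hY]
    rw [Finset.sum_congr rfl hk, ← Finset.mul_sum, ← Finset.sum_mul]
    have sh2 : ∀ i < N - j, 1 - r ^ 2 * (p ^ 2) ^ (2 * j) * p ^ 2 / (e * (p ^ 2) ^ j) * (p ^ 2) ^ i ≠ 0 := by
      intro i hi
      convert h2 (j + i) (by omega) using 2
      rw [two_mul, pow_add, pow_add]; field_simp
    have sh3 : ∀ i : ℕ, 1 - r ^ 2 * (p ^ 2) ^ (2 * j) * p ^ 2 * (p ^ 2) ^ i ≠ 0 := by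
      intro i
      convert ha (2 * j + 1 + i) using 2
      ring
    rw [six (p ^ 2) (r ^ 2 * (p ^ 2) ^ (2 * j)) (e * (p ^ 2) ^ j) hQ (mul_ne_zero he (pow_ne_zero _ hQ))
      (ha _) (N - j) h1 sh2 sh3 T hT0 hT (N - j) le_rfl]
    have z1 := qp_ne_zero sh2
    have z2 : qp (r ^ 2 * (p ^ 2) ^ (2 * j) * p ^ 2) (p ^ 2) (N - j) ≠ 0 := qp_ne_zero fun i _ => sh3 i
    rw [div_mul_div_cancel₀ z1, div_self z2]; ring
  rw [Finset.sum_congr rfl fun k _ => step1 k, Finset.mul_sum]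
  rw [sum_triangle N (fun k j => β j * (W k * Y k j))]
  refine Finset.sum_congr rfl fun j hj => ?_
  rw [← Finset.mul_sum, step2 j hj]
  simp only [hβ]; ring
end watson

section core

def qd {R : Type*} [CommRing R] (x q y : R) (k : ℕ) : R :=
  ∏ j ∈ Finset.range k, (1 + (x * q ^ j) ^ 2 - x * q ^ j * y)

def tl {R : Type*} [CommRing R] (g : ℕ → R) (N m : ℕ) : R := ∏ j ∈ Finset.range m, g (N - j)

def PL {S : Type*} [CommRing S] (p r y : S) (N : ℕ) : S :=
  ∑ k ∈ range (N + 1), (-1) ^ k * (1 + r * (p ^ 2) ^ k) *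
    (qp (r ^ 2) (p ^ 2) k * tl (fun i => 1 - (p ^ 2) ^ i) N (N - k)) *
    (qd (r ^ 2) (p ^ 2) y k * tl (fun i => 1 + ((p ^ 2) ^ i) ^ 2 - (p ^ 2) ^ i * y) N (N - k)) *
    (p ^ (k * k + 2 * k) * r ^ (2 * (N - k)))

def PR {S : Type*} [CommRing S] (p r y : S) (N : ℕ) : S :=
  p ^ (N * (N - 1)) * r ^ (2 * N) * ∑ k ∈ range (N + 1), qp p (p ^ 2) k *
    (qp (p ^ 2 * (p ^ 2) ^ k) (p ^ 2) (N - k) * qp (r * p ^ 2 * (p ^ 2) ^ k) (p ^ 2) (N - k) *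
      qp (r * p * (p ^ 2) ^ k) (p ^ 2) (N - k)) *
    (qd (r ^ 2) (p ^ 2) y k * tl (fun i => 1 + ((p ^ 2) ^ i) ^ 2 - (p ^ 2) ^ i * y) N N) *
    (p ^ (2 * k) * r ^ (2 * (N - k)))

def rst {S : Type*} [CommRing S] (p r : S) (h : ℕ) : S :=
  qp (r * p ^ 2) (p ^ 2) h * qp (r * p ^ 2 * (p ^ 2) ^ (h + 1)) (p ^ 2) (h + 1)

def PP {S : Type*} [CommRing S] (p r y : S) (h : ℕ) : S :=
  (1 - r) * qp (r * p) (p ^ 2) (2 * h + 2) * rst p r h * PL p r y (2 * h + 2)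
    - (1 + r * p ^ (2 * h + 2)) * PR p r y (2 * h + 2)

lemma rst_mul {S : Type*} [CommRing S] (p r : S) (h : ℕ) :
    (1 - r * p ^ (2 * h + 2)) * rst p r h = qp (r * p ^ 2) (p ^ 2) (2 * h + 2) := by
  have : 2 * h + 2 = (h + 1) + (h + 1) := by ring
  rw [this, qp_add, qp_succ, rst]
  have e : r * p ^ 2 * (p ^ 2) ^ h = r * p ^ (h + 1 + (h + 1)) := by ring
  rw [e]; ring

lemma PP_map {S S' : Type*} [CommRing S] [CommRing S'] (f : S →+* S') (p r y : S) (h : ℕ) :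
    f (PP p r y h) = PP (f p) (f r) (f y) h := by
  simp [PP, PL, PR, rst, qp, qd, tl, map_sum, map_prod]

lemma PL_map {S S' : Type*} [CommRing S] [CommRing S'] (f : S →+* S') (p r y : S) (h : ℕ) :
    f (PL p r y h) = PL (f p) (f r) (f y) h := by
  simp [PL, qp, qd, tl, map_sum, map_prod]

lemma PL_zero {S : Type*} [CommRing S] (p r y : S) (hp : IsUnit p) (N : ℕ) (hw : r * p ^ N = -1) :
    2 * PL p r y N = 0 := by
  set c : ℕ → S := fun k => ∏ j ∈ range k, (-(r ^ 2 * (p ^ 2) ^ j)) with hc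
  have hw2 : r ^ 2 * (p ^ 2) ^ N = 1 := by
    rw [← pow_mul, mul_comm 2 N, pow_mul, ← mul_pow, hw]; ring
  have hcp : ∀ k, c k * p ^ k = (-1) ^ k * r ^ (2 * k) * p ^ (k * k) := by
    intro k
    induction k with
    | zero => simp [hc]
    | succ k ih =>
      have : c (k + 1) = c k * (-(r ^ 2 * (p ^ 2) ^ k)) := by simp [hc, Finset.prod_range_succ]
      rw [this]
      calc _ = c k * p ^ k * (-(r ^ 2 * (p ^ 2) ^ k) * p) := by ring
        _ = _ := by rw [ih]; ring
  have hj : ∀ j k, j < k → k ≤ N → r ^ 2 * (p ^ 2) ^ j * (p ^ 2) ^ (N - j) = 1 := by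
    intro j k h1 h2
    rw [mul_assoc, ← pow_add, Nat.add_sub_cancel' (by omega), hw2]
  have q1 : ∀ k ≤ N, qp (r ^ 2) (p ^ 2) k = c k * tl (fun i => 1 - (p ^ 2) ^ i) N k := by
    intro k hk
    simp only [qp, hc, tl]
    rw [← Finset.prod_mul_distrib]
    refine Finset.prod_congr rfl fun j hj' => ?_
    linear_combination -hj j k (Finset.mem_range.mp hj') hk
  have q2 : ∀ k ≤ N, qd (r ^ 2) (p ^ 2) y k =
      c k ^ 2 * tl (fun i => 1 + ((p ^ 2) ^ i) ^ 2 - (p ^ 2) ^ i * y) N k := by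
    intro k hk
    simp only [qd, hc, tl]
    rw [← Finset.prod_pow, ← Finset.prod_mul_distrib]
    refine Finset.prod_congr rfl fun j hj' => ?_
    have := hj j k (Finset.mem_range.mp hj') hk
    generalize (p ^ 2) ^ j = a at *
    generalize (p ^ 2) ^ (N - j) = b at *
    linear_combination (-(1 + r ^ 2 * a * b) + r ^ 2 * a * y) * this
  have key : ∀ k k', k + k' = N →
      (-1) ^ k * (1 + r * (p ^ 2) ^ k) * c k ^ 3 * (p ^ (k * k + 2 * k) * r ^ (2 * k')) *
        p ^ (k + k' + 4 * (k * k')) = (p ^ k' - p ^ k) * r ^ (2 * N) := by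
    intro k k' hk
    have e1 : r ^ (4 * k) * (p ^ (4 * (k * k)) * p ^ (4 * (k * k'))) = 1 := by
      have : r ^ (4 * k) * (p ^ (4 * (k * k)) * p ^ (4 * (k * k'))) = (r * p ^ N) ^ (4 * k) := by
        rw [← hk]; ring
      rw [this, hw, pow_mul]; norm_num
    have e2 : r * (p ^ 2) ^ k * p ^ k' = - p ^ k := by
      calc _ = (r * p ^ N) * p ^ k := by rw [← hk]; ring
        _ = _ := by rw [hw]; ring
    have e3 : ((-1 : S) ^ k) * ((-1) ^ k) ^ 3 = 1 := by
      rw [← pow_succ', ← pow_mul, mul_comm, pow_mul]; norm_num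
    calc _ = (-1) ^ k * (1 + r * (p ^ 2) ^ k) * (c k * p ^ k) ^ 3 * (p ^ (k * k) * r ^ (2 * k')) *
          (p ^ k' * p ^ (4 * (k * k'))) := by ring
      _ = ((-1) ^ k * ((-1) ^ k) ^ 3) * (r ^ (4 * k) * (p ^ (4 * (k * k)) * p ^ (4 * (k * k')))) *
          (p ^ k' + r * (p ^ 2) ^ k * p ^ k') * r ^ (2 * (k + k')) := by rw [hcp]; ring
      _ = _ := by rw [e1, e2, e3, hk]; ring
  rw [two_mul]
  nth_rw 2 [PL]
  rw [← Finset.sum_range_reflect, PL, ← Finset.sum_add_distrib]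
  refine Finset.sum_eq_zero fun k hk => ?_
  have hk' : k ≤ N := Nat.lt_succ_iff.mp (Finset.mem_range.mp hk)
  obtain ⟨k', rfl⟩ := Nat.exists_eq_add_of_le hk'
  have s1 : k + k' + 1 - 1 - k = k' := by omega
  have s2 : k + k' - k = k' := by omega
  have s3 : k + k' - k' = k := by omega
  rw [s1, s2, s3, q1 k (by omega), q1 k' (by omega), q2 k (by omega), q2 k' (by omega)]
  have k1 := key k k' rfl
  have k2 := key k' k (by omega)
  refine (hp.pow (k + k' + 4 * (k * k'))).mul_left_injective ?_
  have e5 : k' + k + 4 * (k' * k) = k + k' + 4 * (k * k') := by ring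
  rw [e5] at k2
  simp only [zero_mul]
  linear_combination (tl (fun i => 1 - (p ^ 2) ^ i) (k + k') k * tl (fun i => 1 - (p ^ 2) ^ i) (k + k') k'
    * (tl (fun i => 1 + ((p ^ 2) ^ i) ^ 2 - (p ^ 2) ^ i * y) (k + k') k *
     tl (fun i => 1 + ((p ^ 2) ^ i) ^ 2 - (p ^ 2) ^ i * y) (k + k') k')) * (k1 + k2)

lemma tl_mul {R : Type*} [CommRing R] (g : ℕ → R) (N k : ℕ) (hk : k ≤ N) :
    tl g N (N - k) * ∏ j ∈ range k, g (j + 1) = ∏ j ∈ range N, g (j + 1) := by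
  obtain ⟨m, rfl⟩ := Nat.exists_eq_add_of_le hk
  rw [Finset.prod_range_add, mul_comm, tl, Nat.add_sub_cancel_left]
  congr 1
  rw [← Finset.prod_range_reflect]
  refine Finset.prod_congr rfl fun j hj => ?_
  have := Finset.mem_range.mp hj
  congr 1; omega

section evalx
variable {K : Type*} [Field K]

lemma qd_eq (a q x : K) (hx : x ≠ 0) (k : ℕ) :
    qd a q (x + x⁻¹) k = qp (a * x) q k * qp (a * x⁻¹) q k := by
  simp only [qd, qp]
  rw [← Finset.prod_mul_distrib]
  refine Finset.prod_congr rfl fun j _ => ?_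
  have : x * x⁻¹ = 1 := mul_inv_cancel₀ hx
  linear_combination (-(a * q ^ j) ^ 2) * this

lemma tl_b (q : K) (N k : ℕ) (hk : k ≤ N) :
    tl (fun i => 1 - q ^ i) N (N - k) * qp q q k = qp q q N := by
  have := tl_mul (fun i => 1 - q ^ i) N k hk
  simpa [qp, pow_succ'] using this

lemma tl_B (q x : K) (hx : x ≠ 0) (N k : ℕ) (hk : k ≤ N) :
    tl (fun i => 1 + (q ^ i) ^ 2 - q ^ i * (x + x⁻¹)) N (N - k) * (qp (q * x) q k * qp (q * x⁻¹) q k)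
      = qp (q * x) q N * qp (q * x⁻¹) q N := by
  rw [← qd_eq q q x hx, ← qd_eq q q x hx]
  have := tl_mul (fun i => 1 + (q ^ i) ^ 2 - q ^ i * (x + x⁻¹)) N k hk
  simpa [qd, pow_succ'] using this

def Lx (p r x : K) (N : ℕ) : K :=
  ∑ k ∈ range (N + 1), (-1) ^ k * (1 + r * (p ^ 2) ^ k) / (1 + r) *
    (qp (r ^ 2) (p ^ 2) k * (qp (r ^ 2 * x) (p ^ 2) k * qp (r ^ 2 * x⁻¹) (p ^ 2) k) /
      (qp (p ^ 2) (p ^ 2) k * (qp (p ^ 2 * x) (p ^ 2) k * qp (p ^ 2 * x⁻¹) (p ^ 2) k))) *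
    (p ^ (k * k + 2 * k) * (r ^ (2 * k))⁻¹)

def Rx (p r x : K) (N : ℕ) : K :=
  (1 - (r * p ^ N) ^ 2) / (1 - r ^ 2) * (p ^ (N * (N - 1)) * r ^ (2 * N)) *
  ∑ k ∈ range (N + 1), (qp p (p ^ 2) k /
      (qp (p ^ 2) (p ^ 2) k * qp (r * p ^ 2) (p ^ 2) k * qp (r * p) (p ^ 2) k)) *
    (qp (r ^ 2 * x) (p ^ 2) k * qp (r ^ 2 * x⁻¹) (p ^ 2) k) *
    (p ^ (2 * k) * (r ^ (2 * k))⁻¹)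

def Mx (p r x : K) (h : ℕ) : K :=
  r ^ (2 * (2 * h + 2)) * (1 + r) * (1 - r) * qp (p ^ 2) (p ^ 2) (2 * h + 2) *
    qp (r * p) (p ^ 2) (2 * h + 2) * rst p r h *
    (qp (p ^ 2 * x) (p ^ 2) (2 * h + 2) * qp (p ^ 2 * x⁻¹) (p ^ 2) (2 * h + 2))

lemma sgen {p r : K} (ha : ∀ j : ℕ, 1 - r ^ 2 * (p ^ 2) ^ j ≠ 0) (j : ℕ) :
    1 - r * p ^ j ≠ 0 ∧ 1 + r * p ^ j ≠ 0 := by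
  rw [← mul_ne_zero_iff]
  have := ha j
  convert this using 1; rw [← pow_mul, mul_comm 2 j, pow_mul]; ring

lemma alg1 (u v a1 a2 a3 a4 a5 a6 a7 a8 a9 b d e : K) (hv : v ≠ 0) (m1 : a1 ≠ 0) (m2 : a2 ≠ 0)
    (m3 : a3 ≠ 0) (m4 : a4 ≠ 0) :
    e * u * (b * a6) * (a8 * a9 * a7) * (d * a5) =
      a5 * a4 * v * (a6 * a1) * (a7 * (a2 * a3)) *
        (e * u / v * (b * (a8 * a9) / (a1 * (a2 * a3))) * (d * a4⁻¹)) := by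
  field_simp

lemma alg2 (c c1 c2 c3 c4 c5 a1 a2 a3 a4 a5 a8 a9 d : K) (m1 : a1 ≠ 0) (m2 : a2 ≠ 0)
    (m3 : a3 ≠ 0) (m4 : a4 ≠ 0) :
    c * (c3 * c4 * c5) * (a8 * a9 * (c1 * c2)) * (d * a5) =
      a5 * a4 * (a1 * c3) * (a2 * c4) * (a3 * c5) * (c1 * c2) *
        (c / (a1 * a2 * a3) * (a8 * a9) * (d * a4⁻¹)) := by
  field_simp

lemma PP_eval (p r x : K) (h : ℕ) (hr : r ≠ 0) (hx : x ≠ 0)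
    (h1 : ∀ j : ℕ, 1 - p ^ 2 * (p ^ 2) ^ j ≠ 0) (ha : ∀ j : ℕ, 1 - r ^ 2 * (p ^ 2) ^ j ≠ 0)
    (hx1 : ∀ j < 2 * h + 2, 1 - p ^ 2 * x * (p ^ 2) ^ j ≠ 0)
    (hx2 : ∀ j < 2 * h + 2, 1 - p ^ 2 * x⁻¹ * (p ^ 2) ^ j ≠ 0) :
    PP p r (x + x⁻¹) h = Mx p r x h * (Lx p r x (2 * h + 2) - Rx p r x (2 * h + 2)) := by
  have s2 := sgen ha
  have hr1 : 1 - r ≠ 0 := by simpa using (s2 0).1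
  have hr2 : 1 + r ≠ 0 := by simpa using (s2 0).2
  have b3 : ∀ j : ℕ, 1 - r * p ^ 2 * (p ^ 2) ^ j ≠ 0 := by
    intro j; rw [mul_assoc, ← pow_succ', ← pow_mul]; exact (s2 _).1
  have b4 : ∀ j : ℕ, 1 - r * p * (p ^ 2) ^ j ≠ 0 := by
    intro j; rw [mul_assoc, ← pow_mul, ← pow_succ']; exact (s2 _).1
  have hrst := rst_mul p r h
  have hR := qd_eq (r ^ 2) (p ^ 2) x hx
  unfold PP Mx
  set N := 2 * h + 2 with hN
  have eL : PL p r (x + x⁻¹) N = r ^ (2 * N) * (1 + r) * qp (p ^ 2) (p ^ 2) N *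
      (qp (p ^ 2 * x) (p ^ 2) N * qp (p ^ 2 * x⁻¹) (p ^ 2) N) * Lx p r x N := by
    rw [PL, Lx, Finset.mul_sum]
    refine Finset.sum_congr rfl fun k hk => ?_
    have hk' : k ≤ N := Nat.lt_succ_iff.mp (Finset.mem_range.mp hk)
    rw [hR, ← tl_b (p ^ 2) N k hk', ← tl_B (p ^ 2) x hx N k hk']
    have e1 : r ^ (2 * N) = r ^ (2 * (N - k)) * r ^ (2 * k) := by
      rw [← pow_add]; congr 1; omega
    have m1 : qp (p ^ 2) (p ^ 2) k ≠ 0 := qp_ne_zero fun j _ => h1 j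
    have m2 : qp (p ^ 2 * x) (p ^ 2) k ≠ 0 := qp_ne_zero fun j hj => hx1 j (by omega)
    have m3 : qp (p ^ 2 * x⁻¹) (p ^ 2) k ≠ 0 := qp_ne_zero fun j hj => hx2 j (by omega)
    have m4 : r ^ (2 * k) ≠ 0 := pow_ne_zero _ hr
    rw [e1]
    exact alg1 _ _ _ _ _ _ _ _ _ _ _ _ _ _ hr2 m1 m2 m3 m4
  have eR : (1 + r * p ^ N) * PR p r (x + x⁻¹) N = (1 + r) * (1 - r) * rst p r h * r ^ (2 * N) *
      qp (p ^ 2) (p ^ 2) N * qp (r * p) (p ^ 2) N *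
      (qp (p ^ 2 * x) (p ^ 2) N * qp (p ^ 2 * x⁻¹) (p ^ 2) N) * Rx p r x N := by
    have e0 : (1 - (r * p ^ N) ^ 2) / (1 - r ^ 2) * ((1 + r) * (1 - r)) * rst p r h
        = (1 + r * p ^ N) * qp (r * p ^ 2) (p ^ 2) N := by
      have d2 : 1 - r ^ 2 = (1 + r) * (1 - r) := by ring
      rw [d2, div_mul_cancel₀ _ (mul_ne_zero hr2 hr1), ← hrst]; ring
    have e00 : (1 + r) * (1 - r) * rst p r h * r ^ (2 * N) *
      qp (p ^ 2) (p ^ 2) N * qp (r * p) (p ^ 2) N *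
      (qp (p ^ 2 * x) (p ^ 2) N * qp (p ^ 2 * x⁻¹) (p ^ 2) N) * Rx p r x N =
      (1 + r * p ^ N) * (p ^ (N * (N - 1)) * r ^ (2 * N) * ((r ^ (2 * N) *
      qp (p ^ 2) (p ^ 2) N * qp (r * p ^ 2) (p ^ 2) N * qp (r * p) (p ^ 2) N *
      (qp (p ^ 2 * x) (p ^ 2) N * qp (p ^ 2 * x⁻¹) (p ^ 2) N)) *
      ∑ k ∈ range (N + 1), (qp p (p ^ 2) k /
      (qp (p ^ 2) (p ^ 2) k * qp (r * p ^ 2) (p ^ 2) k * qp (r * p) (p ^ 2) k)) *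
        (qp (r ^ 2 * x) (p ^ 2) k * qp (r ^ 2 * x⁻¹) (p ^ 2) k) *
        (p ^ (2 * k) * (r ^ (2 * k))⁻¹))) := by
      rw [Rx]
      generalize (∑ k ∈ range (N + 1), _ : K) = S1
      linear_combination (r ^ (2 * N) *
        qp (p ^ 2) (p ^ 2) N * qp (r * p) (p ^ 2) N *
        (qp (p ^ 2 * x) (p ^ 2) N * qp (p ^ 2 * x⁻¹) (p ^ 2) N) *
        (p ^ (N * (N - 1)) * r ^ (2 * N)) * S1) * e0
    rw [e00, PR, Finset.mul_sum (a := r ^ (2 * N) * _ * _ * _ * _)]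
    congr 2
    refine Finset.sum_congr rfl fun k hk => ?_
    have hk' : k ≤ N := Nat.lt_succ_iff.mp (Finset.mem_range.mp hk)
    have t0 := tl_B (p ^ 2) x hx N 0 (Nat.zero_le _)
    rw [qp_zero, qp_zero, mul_one, mul_one, Nat.sub_zero] at t0
    rw [hR, t0]
    have e1 : r ^ (2 * N) = r ^ (2 * (N - k)) * r ^ (2 * k) := by
      rw [← pow_add]; congr 1; omega
    have sp : ∀ z : K, qp z (p ^ 2) N = qp z (p ^ 2) k * qp (z * (p ^ 2) ^ k) (p ^ 2) (N - k) := by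
      intro z; rw [← qp_add]; congr 1; omega
    rw [sp (p ^ 2), sp (r * p ^ 2), sp (r * p)]
    have m1 : qp (p ^ 2) (p ^ 2) k ≠ 0 := qp_ne_zero fun j _ => h1 j
    have m2 : qp (r * p ^ 2) (p ^ 2) k ≠ 0 := qp_ne_zero fun j hj => b3 j
    have m3 : qp (r * p) (p ^ 2) k ≠ 0 := qp_ne_zero fun j hj => b4 j
    have m4 : r ^ (2 * k) ≠ 0 := pow_ne_zero _ hr
    rw [e1]
    exact alg2 _ _ _ _ _ _ _ _ _ _ _ _ _ _ m1 m2 m3 m4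
  rw [eL, eR]; ring
end evalx

end core

section vanish
variable {K : Type*} [Field K]

lemma prefac (r q : K) (p : K) (hpq : q = p ^ 2) (hr : r ≠ 0) (hp : p ≠ 0) (N : ℕ) :
    qp (q * (r ^ 2 * q ^ N)⁻¹) q N * (r ^ (2 * N) * p ^ (N * (N - 1))) = (-1) ^ N * qp (r ^ 2) q N := by
  have hq : q ≠ 0 := by rw [hpq]; exact pow_ne_zero _ hp
  induction N with
  | zero => simp [qp]
  | succ N ih =>
    have e1 : q * (r ^ 2 * q ^ (N + 1))⁻¹ = (r ^ 2 * q ^ N)⁻¹ := by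
      field_simp; ring
    have e2 : (N + 1) * (N + 1 - 1) = N * (N - 1) + 2 * N := by
      cases N with
      | zero => rfl
      | succ m => simp; ring
    have e3 : (r ^ 2 * q ^ N)⁻¹ * q = q * (r ^ 2 * q ^ N)⁻¹ := mul_comm _ _
    have e4 : (1 - (r ^ 2 * q ^ N)⁻¹) * (r ^ 2 * q ^ N) = - (1 - r ^ 2 * q ^ N) := by
      field_simp; ring
    rw [e1, qp_succ', e3, qp_succ, e2]
    have e5 : p ^ (2 * N) = q ^ N := by rw [hpq, pow_mul]
    rw [pow_add p, e5]
    calc _ = (qp (q * (r ^ 2 * q ^ N)⁻¹) q N * (r ^ (2 * N) * p ^ (N * (N - 1)))) *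
        ((1 - (r ^ 2 * q ^ N)⁻¹) * (r ^ 2 * q ^ N)) := by ring
      _ = _ := by rw [ih, e4]; ring

lemma PP_vanish (p r : K) (h : ℕ) (hr : r ≠ 0) (hp : p ≠ 0)
    (h1 : ∀ j : ℕ, 1 - p ^ 2 * (p ^ 2) ^ j ≠ 0) (ha : ∀ j : ℕ, 1 - r ^ 2 * (p ^ 2) ^ j ≠ 0) :
    PP p r ((r * p ^ (2 * h + 2)) ^ 2 + ((r * p ^ (2 * h + 2)) ^ 2)⁻¹) h = 0 := by
  have hw : (r * p ^ (2 * h + 2)) ^ 2 ≠ 0 := pow_ne_zero _ (mul_ne_zero hr (pow_ne_zero _ hp))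
  have hev : (-1 : K) ^ (2 * h + 2) = 1 := by
    rw [show 2 * h + 2 = 2 * (h + 1) by ring, pow_mul]; norm_num
  have hx2 : ∀ j < 2 * h + 2, 1 - p ^ 2 * ((r * p ^ (2 * h + 2)) ^ 2)⁻¹ * (p ^ 2) ^ j ≠ 0 := by
    intro j hj
    have := ha (2 * h + 2 - j - 1)
    have e : (r * p ^ (2 * h + 2)) ^ 2 = r ^ 2 * (p ^ 2) ^ (2 * h + 2 - j - 1) * (p ^ 2 * (p ^ 2) ^ j) := by
      rw [mul_assoc, ← pow_succ', ← pow_add]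
      rw [show 2 * h + 2 - j - 1 + (j + 1) = 2 * h + 2 by omega]; ring
    intro h0
    apply this
    have h3 : (r * p ^ (2 * h + 2)) ^ 2 = p ^ 2 * (p ^ 2) ^ j := by
      have : p ^ 2 * (p ^ 2) ^ j = (r * p ^ (2 * h + 2)) ^ 2 *
        (p ^ 2 * ((r * p ^ (2 * h + 2)) ^ 2)⁻¹ * (p ^ 2) ^ j) := by field_simp
      rw [this, ← sub_eq_zero.mp h0, mul_one]
    rw [h3] at e
    have h4 : p ^ 2 * (p ^ 2) ^ j ≠ 0 := mul_ne_zero (pow_ne_zero _ hp) (pow_ne_zero _ (pow_ne_zero _ hp))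
    have : r ^ 2 * (p ^ 2) ^ (2 * h + 2 - j - 1) = 1 := by
      apply mul_right_cancel₀ h4; rw [← e, one_mul]
    rw [this, sub_self]
  have hx1 : ∀ j < 2 * h + 2, 1 - p ^ 2 * (r * p ^ (2 * h + 2)) ^ 2 * (p ^ 2) ^ j ≠ 0 := by
    intro j hj
    have := ha (2 * h + 2 + (j + 1))
    convert this using 2; ring
  rw [PP_eval p r _ h hr hw h1 ha hx1 hx2]
  set N := 2 * h + 2 with hN
  have hT : ∀ m, (-1 : K) ^ (m + 1) * p ^ ((m + 1) * (m + 1 - 1)) =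
      (-1) ^ m * p ^ (m * (m - 1)) * (- (p ^ 2) ^ m) := by
    intro m
    have e2 : (m + 1) * (m + 1 - 1) = m * (m - 1) + 2 * m := by
      cases m with
      | zero => rfl
      | succ m => simp; ring
    rw [e2]; ring
  have hwe : (r * p ^ N) ^ 2 = r ^ 2 * (p ^ 2) ^ N := by ring
  have he : r ^ 2 * (r * p ^ N) ^ 2 ≠ 0 := mul_ne_zero (pow_ne_zero _ hr) hw
  have c1 : r ^ 2 * p ^ 2 / (r ^ 2 * (r * p ^ N) ^ 2) = p ^ 2 * ((r * p ^ N) ^ 2)⁻¹ := by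
    field_simp
  have c2 : ((p ^ 2) ^ N)⁻¹ = r ^ 2 * ((r * p ^ N) ^ 2)⁻¹ := by
    rw [hwe]; field_simp
  have c3 : r ^ 2 * p ^ 2 * (p ^ 2) ^ N = p ^ 2 * (r * p ^ N) ^ 2 := by ring
  have c4 : p ^ 2 * (r * p ^ N) ^ 2 / (r ^ 2 * (r * p ^ N) ^ 2) = p ^ 2 * (r ^ 2)⁻¹ := by
    field_simp
  have W := watson p r (r ^ 2 * (r * p ^ N) ^ 2) hp he (fun m => (-1) ^ m * p ^ (m * (m - 1)))
    (by simp) hT N h1 ha (by rw [c1]; exact hx2)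
  rw [c1, c2, c3, c4] at W
  have PF : qp (r ^ 2 * p ^ 2) (p ^ 2) N / qp (p ^ 2 * ((r * p ^ N) ^ 2)⁻¹) (p ^ 2) N =
      (1 - (r * p ^ N) ^ 2) / (1 - r ^ 2) * (p ^ (N * (N - 1)) * r ^ (2 * N)) := by
    have pf := prefac r (p ^ 2) p rfl hr hp N
    rw [hev, one_mul, ← hwe] at pf
    have d1 : qp (p ^ 2 * ((r * p ^ N) ^ 2)⁻¹) (p ^ 2) N ≠ 0 := qp_ne_zero hx2
    have d2 : 1 - r ^ 2 ≠ 0 := by simpa using ha 0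
    have d3 := qp_succ (r ^ 2) (p ^ 2) N
    rw [qp_succ', ← hwe] at d3
    rw [div_mul_eq_mul_div, div_eq_div_iff d1 d2]
    linear_combination d3 - (1 - (r * p ^ N) ^ 2) * pf
  have : Lx p r ((r * p ^ N) ^ 2) N = Rx p r ((r * p ^ N) ^ 2) N := by
    rw [Lx, Rx, ← PF]
    refine Eq.trans ?_ (W.trans ?_)
    · refine Finset.sum_congr rfl fun k _ => ?_
      have e2 : k * k + 2 * k = k * (k - 1) + 2 * k + k := by
        cases k with
        | zero => rfl
        | succ m => simp; ring
      rw [e2, pow_add p (k * (k - 1) + 2 * k) k, pow_add p (k * (k - 1)) (2 * k), pow_mul p 2 k, pow_mul r, ← inv_pow (r ^ 2) k, mul_pow (p ^ 2) _ k]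
      simp only [div_eq_mul_inv, mul_inv]
      ring
    · congr 1
      refine Finset.sum_congr rfl fun k _ => ?_
      rw [pow_mul p, pow_mul r, ← inv_pow (r ^ 2) k, mul_pow (p ^ 2) _ k]
      ring
  rw [this, sub_self, mul_zero]
end vanish

section coredvd

lemma core_dvd {A K : Type*} [CommRing A] [IsDomain A] [Field K] (f : A →+* K)
    (hf : Function.Injective f) (p r : A) (hp : IsUnit p) (hr : IsUnit r) (h2 : IsUnit (2 : A))
    (h1 : ∀ j : ℕ, 1 - f p ^ 2 * (f p ^ 2) ^ j ≠ 0) (ha : ∀ j : ℕ, 1 - f r ^ 2 * (f p ^ 2) ^ j ≠ 0)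
    (h : ℕ) : (1 + r * p ^ (2 * h + 2)) * (1 - (r * p ^ (2 * h + 2)) ^ 2) ^ 2 ∣ PP p r 2 h := by
  set N := 2 * h + 2 with hN
  set w := r * p ^ N with hw
  have hwu : IsUnit w := hr.mul (hp.pow N)
  have hw1 : 1 + w ≠ 0 := by
    intro h0
    apply ((sgen ha) N).2
    have := congrArg f h0
    simpa [hw] using this
  -- divisibility of the polynomial by the constant
  have hdvd : (C (1 + w) : A[X]) ∣ PP (C p) (C r) X h := by
    have hL : (C (1 + w) : A[X]) ∣ PL (C p) (C r) X N := by
      have h2' : IsUnit (2 : A[X]) := by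
        have := h2.map (C : A →+* A[X])
        rwa [map_ofNat] at this
      rw [← h2'.dvd_mul_left, ← Ideal.mem_span_singleton, ← Ideal.Quotient.eq_zero_iff_mem]
      rw [map_mul, PL_map, map_ofNat]
      apply PL_zero
      · exact (hp.map (C : A →+* A[X])).map _
      · rw [← map_pow, ← map_mul, eq_neg_iff_add_eq_zero, ← map_one (Ideal.Quotient.mk _), ← map_add,
          Ideal.Quotient.eq_zero_iff_mem, Ideal.mem_span_singleton]
        have : (C r * C p ^ N + 1 : A[X]) = C (1 + w) := by
          rw [hw]; simp [add_comm]
        rw [this]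
    unfold PP
    refine dvd_sub (Dvd.dvd.mul_left hL _) (Dvd.dvd.mul_right ?_ _)
    have : (1 + C r * C p ^ N : A[X]) = C (1 + w) := by
      rw [hw]; simp
    rw [this]
  obtain ⟨P, hP⟩ := hdvd
  obtain ⟨v, hv⟩ := hwu.exists_right_inv
  have ev : ∀ y : A, PP p r y h = (1 + w) * P.eval y := by
    intro y
    have := congrArg (Polynomial.evalRingHom y) hP
    rw [PP_map, map_mul] at this
    simpa using this
  have hy0 : P.eval (w ^ 2 + v ^ 2) = 0 := by
    have e := ev (w ^ 2 + v ^ 2)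
    have z : PP p r (w ^ 2 + v ^ 2) h = 0 := by
      apply hf
      rw [PP_map, map_zero]
      have hv' : f v = (f w)⁻¹ := by
        have := congrArg f hv
        rw [map_mul, map_one] at this
        exact (inv_eq_of_mul_eq_one_right this).symm
      have := PP_vanish (f p) (f r) h (hr.map f).ne_zero (hp.map f).ne_zero h1 ha
      rw [← this, map_add, map_pow, map_pow, hv', inv_pow, hw, map_mul, map_pow]
    rw [z] at e
    exact (mul_eq_zero.mp e.symm).resolve_left hw1
  have hs := Polynomial.sub_dvd_eval_sub 2 (w ^ 2 + v ^ 2) P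
  rw [hy0, sub_zero] at hs
  rw [ev]
  refine mul_dvd_mul_left _ (dvd_trans ?_ hs)
  refine ⟨- v ^ 2, ?_⟩
  linear_combination ((w * v + 1) * (w ^ 2 - 2)) * hv
end coredvd

section ring

lemma cop_X (n : ℕ) (hn : 0 < n) :
    IsCoprime (X : ℚ[X]) (cyclotomic n ℚ * (cyclotomic n ℚ).comp (-X)) := by
  obtain ⟨m, rfl⟩ : ∃ m, n = m + 1 := ⟨n - 1, by omega⟩
  have h1 : IsCoprime (X : ℚ[X]) (X ^ (m + 1) - 1) := ⟨X ^ m, -1, by ring⟩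
  have h2 : IsCoprime (X : ℚ[X]) (cyclotomic (m + 1) ℚ) :=
    h1.of_isCoprime_of_dvd_right (cyclotomic.dvd_X_pow_sub_one _ _)
  have h3 := h2.map (compRingHom (-X : ℚ[X]))
  simp only [coe_compRingHom_apply, X_comp] at h3
  exact h2.mul_right ((IsCoprime.neg_left_iff _ _).mp h3)

lemma cop_one (n : ℕ) (hn : 0 < n) (m : ℕ) (hm : ¬ n ∣ m) :
    IsCoprime (X ^ m - 1 : ℚ[X]) (cyclotomic n ℚ) := by
  refine IsCoprime.symm ?_
  rw [Irreducible.coprime_iff_not_dvd (cyclotomic.irreducible_rat hn)]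
  intro hd
  apply hm
  have hz := Complex.isPrimitiveRoot_exp n hn.ne'
  rw [← hz.pow_eq_one_iff_dvd]
  have h1 : aeval (Complex.exp (2 * Real.pi * Complex.I / n)) (cyclotomic n ℚ) = 0 := by
    have := hz.isRoot_cyclotomic hn
    rw [aeval_def, ← eval_map, map_cyclotomic]
    exact this
  obtain ⟨g, hg⟩ := hd
  have := congrArg (aeval (Complex.exp (2 * Real.pi * Complex.I / n))) hg
  rw [map_mul, h1, zero_mul] at this
  simpa [sub_eq_zero] using this

lemma cop_two (n : ℕ) (hn : 0 < n) (hodd : Odd n) (m : ℕ) (hm : ¬ n ∣ m) :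
    IsCoprime (X ^ m - 1 : ℚ[X]) (cyclotomic n ℚ * (cyclotomic n ℚ).comp (-X)) := by
  refine (cop_one n hn m hm).mul_right ?_
  have h2 : ¬ n ∣ 2 * m := fun h => hm ((Nat.Coprime.dvd_of_dvd_mul_left hodd.coprime_two_right) h)
  have h3 := (cop_one n hn (2 * m) h2).map (compRingHom (-X : ℚ[X]))
  simp only [coe_compRingHom_apply, sub_comp, pow_comp, X_comp, one_comp] at h3
  rw [pow_mul, neg_sq, ← pow_mul] at h3
  refine h3.of_isCoprime_of_dvd_left ⟨X ^ m + 1, by ring⟩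

/-- The localisation of `ℚ[X]` at polynomials coprime to `P`. -/
def AS (P : ℚ[X]) : Subring (RatFunc ℚ) where
  carrier := {f | ∃ g h : ℚ[X], h ≠ 0 ∧ IsCoprime h P ∧
    f = algebraMap ℚ[X] (RatFunc ℚ) g / algebraMap ℚ[X] (RatFunc ℚ) h}
  mul_mem' := by
    rintro _ _ ⟨g, h, h0, hc, rfl⟩ ⟨g', h', h0', hc', rfl⟩
    refine ⟨g * g', h * h', mul_ne_zero h0 h0', hc.mul_left hc', ?_⟩
    rw [map_mul, map_mul, div_mul_div_comm]
  one_mem' := ⟨1, 1, one_ne_zero, isCoprime_one_left, by simp⟩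
  add_mem' := by
    rintro _ _ ⟨g, h, h0, hc, rfl⟩ ⟨g', h', h0', hc', rfl⟩
    refine ⟨g * h' + h * g', h * h', mul_ne_zero h0 h0', hc.mul_left hc', ?_⟩
    rw [div_add_div _ _ (RatFunc.algebraMap_ne_zero h0) (RatFunc.algebraMap_ne_zero h0')]
    simp
  zero_mem' := ⟨0, 1, one_ne_zero, isCoprime_one_left, by simp⟩
  neg_mem' := by
    rintro _ ⟨g, h, h0, hc, rfl⟩
    exact ⟨-g, h, h0, hc, by rw [map_neg, neg_div]⟩

lemma AS_pol (P g : ℚ[X]) : algebraMap ℚ[X] (RatFunc ℚ) g ∈ AS P :=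
  ⟨g, 1, one_ne_zero, isCoprime_one_left, by simp⟩

lemma AS_inv (P h : ℚ[X]) (h0 : h ≠ 0) (hc : IsCoprime h P) :
    (algebraMap ℚ[X] (RatFunc ℚ) h)⁻¹ ∈ AS P :=
  ⟨1, h, h0, hc, by simp⟩

lemma AS_num (P D : ℚ[X]) (hD : ∀ h, IsCoprime h P → IsCoprime h D) (f b : RatFunc ℚ) (hb : b ∈ AS P)
    (hf : f = algebraMap ℚ[X] (RatFunc ℚ) D * b) : D ∣ f.num := by
  obtain ⟨g, h, h0, hc, rfl⟩ := hb
  have e := (RatFunc.num_div_denom f).trans hf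
  rw [← mul_div_assoc, div_eq_div_iff (RatFunc.algebraMap_ne_zero (RatFunc.denom_ne_zero _))
    (RatFunc.algebraMap_ne_zero h0), ← map_mul, ← map_mul, ← map_mul] at e
  have e' := RatFunc.algebraMap_injective ℚ e
  refine IsCoprime.dvd_of_dvd_mul_right (hD h hc).symm ?_
  rw [e', mul_assoc]
  exact dvd_mul_right _ _

lemma AS_qp (P : ℚ[X]) (x q : RatFunc ℚ) (k : ℕ) (h : ∀ j < k, (1 - x * q ^ j)⁻¹ ∈ AS P) :
    (qp x q k)⁻¹ ∈ AS P := by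
  rw [qp, ← Finset.prod_inv_distrib]
  exact Subring.prod_mem _ fun j hj => h j (Finset.mem_range.mp hj)

lemma RX_ne (m : ℤ) (hm : m ≠ 0) : (1 - RatFunc.X ^ m : RatFunc ℚ) ≠ 0 := by
  have key : ∀ k : ℕ, k ≠ 0 → (RatFunc.X ^ k : RatFunc ℚ) ≠ 1 := by
    intro k hk h
    rw [← RatFunc.algebraMap_X, ← map_pow, ← map_one (algebraMap ℚ[X] (RatFunc ℚ))] at h
    have := RatFunc.algebraMap_injective ℚ h
    exact (monic_X_pow_sub_C (1 : ℚ) hk).ne_zero (by simp [this])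
  intro h0
  rw [sub_eq_zero] at h0
  rcases m with k | k
  · refine key k (by rintro rfl; exact hm rfl) ?_
    simpa using h0.symm
  · refine key (k + 1) (by omega) ?_
    rw [zpow_negSucc] at h0
    exact inv_eq_one.mp h0.symm

lemma AS_X (n : ℕ) (hn : 0 < n) (m : ℤ) :
    (RatFunc.X ^ m : RatFunc ℚ) ∈ AS (cyclotomic n ℚ * (cyclotomic n ℚ).comp (-X)) := by
  rcases m with k | k
  · have := AS_pol (cyclotomic n ℚ * (cyclotomic n ℚ).comp (-X)) (X ^ k)
    simpa using this
  · have := AS_inv (cyclotomic n ℚ * (cyclotomic n ℚ).comp (-X)) (X ^ (k + 1))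
      (pow_ne_zero _ X_ne_zero) ((cop_X n hn).pow_left)
    rw [zpow_negSucc]
    simpa using this

lemma AS_one_sub (n : ℕ) (hn : 0 < n) (hodd : Odd n) (m : ℤ) (hm : ¬ (n : ℤ) ∣ m) :
    (1 - RatFunc.X ^ m : RatFunc ℚ)⁻¹ ∈ AS (cyclotomic n ℚ * (cyclotomic n ℚ).comp (-X)) := by
  have key : ∀ k : ℕ, ¬ n ∣ k → (1 - RatFunc.X ^ k : RatFunc ℚ)⁻¹ ∈
      AS (cyclotomic n ℚ * (cyclotomic n ℚ).comp (-X)) := by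
    intro k hk
    have hk0 : k ≠ 0 := by rintro rfl; simp at hk
    have := AS_inv _ (X ^ k - 1) (by simpa using (monic_X_pow_sub_C (1 : ℚ) hk0).ne_zero)
      (cop_two n hn hodd k hk)
    have e : (1 - RatFunc.X ^ k : RatFunc ℚ)⁻¹ = - (algebraMap ℚ[X] (RatFunc ℚ) (X ^ k - 1))⁻¹ := by
      rw [← inv_neg]; simp
    rw [e]
    exact Subring.neg_mem _ this
  rcases m with k | k
  · have := key k (by intro h; exact hm (Int.natCast_dvd_natCast.mpr h))
    simpa using this
  · have h1 := key (k + 1) (by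
      intro h; apply hm; rw [Int.negSucc_eq]
      exact (dvd_neg).mpr (by exact_mod_cast h))
    have e : (1 - RatFunc.X ^ (Int.negSucc k) : RatFunc ℚ)⁻¹ =
        - (RatFunc.X ^ ((k : ℤ) + 1) * (1 - RatFunc.X ^ (k + 1))⁻¹) := by
      have x0 : (RatFunc.X : RatFunc ℚ) ^ (k + 1) ≠ 0 := pow_ne_zero _ RatFunc.X_ne_zero
      have x1 : (1 - RatFunc.X ^ (k + 1) : RatFunc ℚ) ≠ 0 := by
        have := RX_ne ((k : ℤ) + 1) (by omega)
        exact_mod_cast this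
      rw [zpow_negSucc]
      have : (RatFunc.X : RatFunc ℚ) ^ ((k : ℤ) + 1) = RatFunc.X ^ (k + 1) := by exact_mod_cast rfl
      rw [this]
      generalize (RatFunc.X : RatFunc ℚ) ^ (k + 1) = z at *
      rw [inv_eq_iff_eq_inv, ← neg_mul, mul_inv, inv_inv, neg_inv.symm]
      field_simp
      ring
    rw [e]
    exact Subring.neg_mem _ (Subring.mul_mem _ (AS_X n hn _) h1)

end ring

section final

lemma zz (a b : ℤ) (j : ℕ) : (RatFunc.X ^ a * (RatFunc.X ^ b) ^ j : RatFunc ℚ) = RatFunc.X ^ (a + b * j) := by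
  rw [zpow_add₀ RatFunc.X_ne_zero, zpow_mul, zpow_natCast]

lemma zp (b : ℤ) (j : ℕ) : ((RatFunc.X ^ b) ^ j : RatFunc ℚ) = RatFunc.X ^ (b * j) := by
  rw [zpow_mul, zpow_natCast]

lemma zm (a b : ℤ) : (RatFunc.X ^ a * RatFunc.X ^ b : RatFunc ℚ) = RatFunc.X ^ (a + b) := by
  rw [zpow_add₀ RatFunc.X_ne_zero]

lemma main_dvd (n : ℕ) (s : ℤ) (h : ℕ) (hodd : Odd n) (hs : s = 1 ∨ s = -1)
    (hn : (n : ℤ) = 3 * (2 * h + 2) + s) :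
    ((cyclotomic n ℚ).comp (-X)) ^ 3 * (cyclotomic n ℚ) ^ 2 ∣
      RatFunc.num (Lx (RatFunc.X ^ (3 : ℤ)) (RatFunc.X ^ s) 1 (2 * h + 2) -
        Rx (RatFunc.X ^ (3 : ℤ)) (RatFunc.X ^ s) 1 (2 * h + 2)) := by
  have hn0 : 0 < n := by omega
  set Ψ := cyclotomic n ℚ * (cyclotomic n ℚ).comp (-X) with hΨ
  set p : RatFunc ℚ := RatFunc.X ^ (3 : ℤ) with hp
  set r : RatFunc ℚ := RatFunc.X ^ s with hr
  have p2 : p ^ 2 = RatFunc.X ^ (6 : ℤ) := by rw [hp, zp]; norm_num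
  have r2 : r ^ 2 = RatFunc.X ^ (2 * s) := by rw [hr, zp]; congr 1; push_cast; ring
  have hp0 : p ≠ 0 := zpow_ne_zero _ RatFunc.X_ne_zero
  have hr0 : r ≠ 0 := zpow_ne_zero _ RatFunc.X_ne_zero
  have h1 : ∀ j : ℕ, 1 - p ^ 2 * (p ^ 2) ^ j ≠ 0 := by
    intro j; rw [p2, zz]; exact RX_ne _ (by omega)
  have ha : ∀ j : ℕ, 1 - r ^ 2 * (p ^ 2) ^ j ≠ 0 := by
    intro j; rw [p2, r2, zz]; exact RX_ne _ (by omega)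
  have hw : r * p ^ (2 * h + 2) = RatFunc.X ^ n := by
    rw [hr, hp, zz, ← zpow_natCast, hn]; congr 1; push_cast; ring
  have hPP := PP_eval p r 1 h hr0 one_ne_zero h1 ha
    (by intro j _; rw [mul_one]; exact h1 j) (by intro j _; rw [inv_one, mul_one]; exact h1 j)
  rw [show (1 : RatFunc ℚ) + 1⁻¹ = 2 by norm_num] at hPP
  -- arithmetic
  have three : ¬ (3 : ℤ) ∣ n := by omega
  have cop6 : IsCoprime (n : ℤ) 6 := by
    rw [Int.isCoprime_iff_gcd_eq_one]
    have : Nat.Coprime n 6 := by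
      rw [show 6 = 2 * 3 by norm_num, Nat.coprime_mul_iff_right]
      refine ⟨hodd.coprime_two_right, ?_⟩
      refine Nat.Coprime.symm ((Nat.Prime.coprime_iff_not_dvd Nat.prime_three).mpr ?_)
      intro h; exact three (by exact_mod_cast h)
    exact this
  have d1 : ∀ j : ℕ, j < 2 * h + 2 → ¬ (n : ℤ) ∣ 6 + 6 * j := by
    intro j hj hd
    have : (n : ℤ) ∣ 6 * (1 + j) := by convert hd using 1; ring
    have := Int.le_of_dvd (by omega) (cop6.dvd_of_dvd_mul_left this)
    omega
  have d2 : ∀ j : ℕ, j < 2 * h + 2 → ¬ (n : ℤ) ∣ 3 + s + 6 * j := by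
    rintro j hj ⟨c, hc⟩
    have c1 : 0 < c := by
      by_contra hh
      have : (n : ℤ) * c ≤ 0 := mul_nonpos_of_nonneg_of_nonpos (by omega) (by omega)
      omega
    have c2 : c < 2 := by
      by_contra hh
      have : (n : ℤ) * 2 ≤ n * c := mul_le_mul_of_nonneg_left (by omega) (by omega)
      omega
    have : c = 1 := by omega
    subst this
    omega
  have d3 : ∀ j : ℕ, j < 2 * h + 2 → j ≠ h → ¬ (n : ℤ) ∣ 6 + s + 6 * j := by
    rintro j hj hjh ⟨c, hc⟩
    have c1 : 0 < c := by
      by_contra hh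
      have : (n : ℤ) * c ≤ 0 := mul_nonpos_of_nonneg_of_nonpos (by omega) (by omega)
      omega
    have c2 : c < 3 := by
      by_contra hh
      have : (n : ℤ) * 3 ≤ n * c := mul_le_mul_of_nonneg_left (by omega) (by omega)
      omega
    obtain rfl | rfl : c = 1 ∨ c = 2 := by omega
    · omega
    · omega
  have d4 : ¬ (n : ℤ) ∣ 2 * s := by
    intro hd
    have : (n : ℤ) ∣ 2 := by
      rcases hs with rfl | rfl
      · simpa using hd
      · simpa using hd
    have := Int.le_of_dvd (by norm_num) this
    omega
  have hM : (Mx p r 1 h)⁻¹ ∈ AS Ψ := by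
    have m1 : (qp (p ^ 2) (p ^ 2) (2 * h + 2))⁻¹ ∈ AS Ψ := by
      refine AS_qp _ _ _ _ fun j hj => ?_
      rw [p2, zz]; exact AS_one_sub n hn0 hodd _ (d1 j hj)
    have m2 : (qp (r * p) (p ^ 2) (2 * h + 2))⁻¹ ∈ AS Ψ := by
      refine AS_qp _ _ _ _ fun j hj => ?_
      rw [p2, hr, hp, zm, zz, add_comm s]; exact AS_one_sub n hn0 hodd _ (d2 j hj)
    have m3 : (rst p r h)⁻¹ ∈ AS Ψ := by
      rw [rst, mul_inv]
      refine Subring.mul_mem _ (AS_qp _ _ _ _ fun j hj => ?_) (AS_qp _ _ _ _ fun j hj => ?_)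
      · rw [p2, hr, zm, zz, add_comm s]
        exact AS_one_sub n hn0 hodd _ (d3 j (by omega) (by omega))
      · rw [mul_assoc, ← pow_add, p2, hr, zm, zz, add_comm s]
        exact AS_one_sub n hn0 hodd _ (d3 _ (by omega) (by omega))
    have m4 : (1 + r)⁻¹ * (1 - r)⁻¹ ∈ AS Ψ := by
      rw [← mul_inv, show (1 + r) * (1 - r) = 1 - r ^ 2 by ring, r2]
      exact AS_one_sub n hn0 hodd _ d4
    have m5 : (r ^ (2 * (2 * h + 2)))⁻¹ ∈ AS Ψ := by
      rw [hr, zp, ← zpow_neg]; exact AS_X n hn0 _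
    have e : (Mx p r 1 h)⁻¹ = (r ^ (2 * (2 * h + 2)))⁻¹ * ((1 + r)⁻¹ * (1 - r)⁻¹) *
        (qp (p ^ 2) (p ^ 2) (2 * h + 2))⁻¹ * (qp (r * p) (p ^ 2) (2 * h + 2))⁻¹ * (rst p r h)⁻¹ *
        ((qp (p ^ 2) (p ^ 2) (2 * h + 2))⁻¹ * (qp (p ^ 2) (p ^ 2) (2 * h + 2))⁻¹) := by
      rw [Mx, inv_one, mul_one]
      simp only [mul_inv]
      ring
    rw [e]
    exact Subring.mul_mem _ (Subring.mul_mem _ (Subring.mul_mem _ (Subring.mul_mem _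
      (Subring.mul_mem _ m5 m4) m1) m2) m3) (Subring.mul_mem _ m1 m1)
  have hM0 : Mx p r 1 h ≠ 0 := by
    have s2 := sgen ha
    have hr1 : 1 - r ≠ 0 := by simpa using (s2 0).1
    have hr2 : 1 + r ≠ 0 := by simpa using (s2 0).2
    have m1 : qp (p ^ 2) (p ^ 2) (2 * h + 2) ≠ 0 := qp_ne_zero fun j _ => h1 j
    have m2 : qp (r * p) (p ^ 2) (2 * h + 2) ≠ 0 := qp_ne_zero fun j _ => by
      rw [mul_assoc, ← pow_mul, ← pow_succ']; exact (s2 _).1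
    have m3 : rst p r h ≠ 0 := by
      intro h0
      have := rst_mul p r h
      rw [h0, mul_zero] at this
      refine qp_ne_zero (fun j _ => ?_) this.symm
      rw [mul_assoc, ← pow_succ', ← pow_mul]; exact (s2 _).1
    rw [Mx, inv_one, mul_one]
    exact mul_ne_zero (mul_ne_zero (mul_ne_zero (mul_ne_zero (mul_ne_zero (mul_ne_zero
      (pow_ne_zero _ hr0) hr2) hr1) m1) m2) m3) (mul_ne_zero m1 m1)
  -- core divisibility
  obtain ⟨b, hb, hbe⟩ : ∃ b ∈ AS Ψ, PP p r 2 h =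
      (1 + RatFunc.X ^ n) * (1 - (RatFunc.X ^ n) ^ 2) ^ 2 * b := by
    have hpm : p ∈ AS Ψ := AS_X n hn0 _
    have hrm : r ∈ AS Ψ := AS_X n hn0 _
    have hpi : p⁻¹ ∈ AS Ψ := by rw [hp, ← zpow_neg]; exact AS_X n hn0 _
    have hri : r⁻¹ ∈ AS Ψ := by rw [hr, ← zpow_neg]; exact AS_X n hn0 _
    have h2i : (2 : RatFunc ℚ)⁻¹ ∈ AS Ψ := by
      have := AS_pol Ψ (C (2⁻¹ : ℚ))
      simpa using this
    have u1 : IsUnit (⟨p, hpm⟩ : AS Ψ) :=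
      IsUnit.of_mul_eq_one ⟨p⁻¹, hpi⟩ (Subtype.ext (mul_inv_cancel₀ hp0))
    have u2 : IsUnit (⟨r, hrm⟩ : AS Ψ) :=
      IsUnit.of_mul_eq_one ⟨r⁻¹, hri⟩ (Subtype.ext (mul_inv_cancel₀ hr0))
    have u3 : IsUnit (2 : AS Ψ) :=
      IsUnit.of_mul_eq_one ⟨2⁻¹, h2i⟩ (Subtype.ext (mul_inv_cancel₀ two_ne_zero))
    obtain ⟨b, hb⟩ := core_dvd (AS Ψ).subtype (Subring.subtype_injective _) ⟨p, hpm⟩ ⟨r, hrm⟩ u1 u2 u3 h1 ha h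
    refine ⟨b, b.2, ?_⟩
    have := congrArg (AS Ψ).subtype hb
    rw [PP_map, map_ofNat] at this
    simp only [map_mul, map_add, map_sub, map_pow, map_one, Subring.subtype_apply] at this
    rw [this, hw]
  obtain ⟨u, hu⟩ := cyclotomic.dvd_X_pow_sub_one n ℚ
  have hu' : (X ^ n + 1 : ℚ[X]) = (cyclotomic n ℚ).comp (-X) * (- u.comp (-X)) := by
    have := congrArg (compRingHom (-X : ℚ[X])) hu
    simp only [coe_compRingHom_apply, sub_comp, pow_comp, X_comp, one_comp, mul_comp] at this
    rw [hodd.neg_pow] at this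
    linear_combination -this
  have hX : (RatFunc.X ^ n : RatFunc ℚ) = algebraMap ℚ[X] (RatFunc ℚ) (X ^ n) := by simp
  refine AS_num Ψ _ ?_ _ (algebraMap ℚ[X] (RatFunc ℚ) ((- u.comp (-X)) ^ 3 * u ^ 2) * b * (Mx p r 1 h)⁻¹)
    (Subring.mul_mem _ (Subring.mul_mem _ (AS_pol _ _) hb) hM) ?_
  · intro t ht
    rw [hΨ, IsCoprime.mul_right_iff] at ht
    exact (ht.2.pow_right).mul_right (ht.1.pow_right)
  · have e1 : Lx p r 1 (2 * h + 2) - Rx p r 1 (2 * h + 2) = PP p r 2 h * (Mx p r 1 h)⁻¹ := by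
      rw [hPP, mul_right_comm, mul_inv_cancel₀ hM0, one_mul]
    have e2 : (1 + RatFunc.X ^ n) * (1 - (RatFunc.X ^ n) ^ 2) ^ 2 = algebraMap ℚ[X] (RatFunc ℚ)
        ((cyclotomic n ℚ).comp (-X) ^ 3 * cyclotomic n ℚ ^ 2 * ((- u.comp (-X)) ^ 3 * u ^ 2)) := by
      have : (cyclotomic n ℚ).comp (-X) ^ 3 * cyclotomic n ℚ ^ 2 * ((- u.comp (-X)) ^ 3 * u ^ 2) =
          (X ^ n + 1) ^ 3 * (X ^ n - 1) ^ 2 := by rw [hu, hu']; ring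
      rw [this, hX]
      simp only [map_mul, map_pow, map_add, map_sub, map_one]
      ring
    rw [e1, hbe, e2, map_mul]; ring

end final

theorem stmt0 (n : ℕ) (s : ℤ) (hpos : 0 < n) (hodd : Odd n)
    (hs : s = 1 ∨ s = -1) (hns : (n : ℤ) ≡ s [ZMOD (3 : ℤ)]) :
    ((cyclotomic n ℚ).comp (-X)) ^ 3 * (cyclotomic n ℚ) ^ 2 ∣
      RatFunc.num
        ((∑ k ∈ Finset.range ((((n : ℤ) - s) / 3).toNat + 1),
            (-1 : RatFunc ℚ) ^ k *
              ((1 + RatFunc.X ^ (6 * (k : ℤ) + s)) *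
                qPoch (RatFunc.X ^ (2 * s)) (RatFunc.X ^ (6 : ℤ)) k ^ 3) /
              ((1 + RatFunc.X ^ s) *
                qPoch (RatFunc.X ^ (6 : ℤ)) (RatFunc.X ^ (6 : ℤ)) k ^ 3) *
              RatFunc.X ^ (3 * (k : ℤ) ^ 2 + 2 * (k : ℤ) * (3 - s))) -
          (-1 : RatFunc ℚ) ^ (((n : ℤ) - s) / 3).toNat *
            (qInt (RatFunc.X ^ (2 : ℤ)) (n : ℤ) / qInt (RatFunc.X ^ (2 : ℤ)) s) *
            RatFunc.X ^ (((n : ℤ) - s) * ((n : ℤ) + s - 3) / 3) *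
            ∑ k ∈ Finset.range ((((n : ℤ) - s) / 3).toNat + 1),
              qPoch (RatFunc.X ^ (2 * s)) (RatFunc.X ^ (6 : ℤ)) k ^ 2 *
                qPoch (RatFunc.X ^ (3 : ℤ)) (RatFunc.X ^ (6 : ℤ)) k /
                (qPoch (RatFunc.X ^ (6 : ℤ)) (RatFunc.X ^ (6 : ℤ)) k *
                  qPoch (RatFunc.X ^ (3 + s)) (RatFunc.X ^ (6 : ℤ)) k *
                  qPoch (RatFunc.X ^ (6 + s)) (RatFunc.X ^ (6 : ℤ)) k) *
                RatFunc.X ^ (2 * (k : ℤ) * (3 - s))) := by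
  obtain ⟨t, ht⟩ : ∃ t : ℤ, (n : ℤ) - s = 3 * t := by
    obtain ⟨t, ht⟩ := hns.symm.dvd
    exact ⟨t, ht⟩
  have ht0 : 0 ≤ t := by rcases hs with rfl | rfl <;> omega
  lift t to ℕ using ht0
  have hev : ∃ g, t = 2 * g := by
    obtain ⟨m, hm⟩ := hodd
    exact ⟨t / 2, by rcases hs with rfl | rfl <;> omega⟩
  have hN : (((n : ℤ) - s) / 3).toNat = t := by rw [ht]; omega
  obtain ⟨g, rfl⟩ := hev
  rcases g with _ | h
  · have hs1 : s = 1 := by omega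
    have hn1 : n = 1 := by omega
    subst hs1 hn1
    have h2 := RX_ne 2 (by norm_num)
    have h1 : (1 + RatFunc.X ^ (1 : ℤ) : RatFunc ℚ) ≠ 0 := by
      intro h0
      apply h2
      have e : (1 - RatFunc.X ^ (2 : ℤ) : RatFunc ℚ) =
        (1 + RatFunc.X ^ (1 : ℤ)) * (1 - RatFunc.X ^ (1 : ℤ)) := by
        rw [zpow_one, zpow_ofNat]; ring
      rw [e, h0, zero_mul]
    rw [hN]
    have hq : qInt (RatFunc.X ^ (2 : ℤ)) ((1 : ℕ) : ℤ) / qInt (RatFunc.X ^ (2 : ℤ)) 1 = 1 := by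
      have : qInt (RatFunc.X ^ (2 : ℤ)) 1 = 1 := by
        rw [qInt, zpow_one]; exact div_self h2
      rw [Nat.cast_one, this, div_one]
    rw [hq]
    convert dvd_zero _
    rw [← RatFunc.num_zero]
    congr 1
    simp [qPoch]
    simpa using sub_eq_zero.mpr (div_self h1)
  have hns' : (n : ℤ) = 3 * (2 * h + 2) + s := by push_cast at ht; linarith
  have main := main_dvd n s h hodd hs hns'
  rw [hN]
  convert main using 2
  rw [show 2 * (h + 1) = 2 * h + 2 by ring]
  have p2 : ((RatFunc.X : RatFunc ℚ) ^ (3 : ℤ)) ^ 2 = RatFunc.X ^ (6 : ℤ) := by rw [zp]; norm_num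
  have r2 : ((RatFunc.X : RatFunc ℚ) ^ s) ^ 2 = RatFunc.X ^ (2 * s) := by
    rw [zp]; congr 1; push_cast; ring
  have hq : ∀ x q k, qPoch x q k = qp x q k := fun _ _ _ => rfl
  congr 1
  · rw [Lx, p2, r2]
    refine Finset.sum_congr rfl fun k _ => ?_
    simp only [hq, inv_one, mul_one]
    have e1 : (RatFunc.X : RatFunc ℚ) ^ (6 * (k : ℤ) + s) = RatFunc.X ^ s * (RatFunc.X ^ (6 : ℤ)) ^ k := by
      rw [zz, add_comm]
    have e2 : (RatFunc.X : RatFunc ℚ) ^ (3 * (k : ℤ) ^ 2 + 2 * (k : ℤ) * (3 - s)) =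
        (RatFunc.X ^ (3 : ℤ)) ^ (k * k + 2 * k) * ((RatFunc.X ^ s) ^ (2 * k))⁻¹ := by
      rw [zp, zp, ← zpow_neg, zm]; congr 1; push_cast; ring
    rw [e1, e2]
    simp only [div_eq_mul_inv, mul_inv]
    ring
  · rw [Rx, p2, r2]
    have e1 : (-1 : RatFunc ℚ) ^ (2 * h + 2) = 1 := by
      rw [show 2 * h + 2 = 2 * (h + 1) by ring, pow_mul]; norm_num
    have e2 : qInt (RatFunc.X ^ (2 : ℤ)) (n : ℤ) / qInt (RatFunc.X ^ (2 : ℤ)) s =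
        (1 - (RatFunc.X ^ s * (RatFunc.X ^ (3 : ℤ)) ^ (2 * h + 2)) ^ 2) / (1 - RatFunc.X ^ (2 * s)) := by
      rw [qInt, qInt, div_div_div_cancel_right₀ (RX_ne 2 (by norm_num)), zz, zp, ← zpow_mul, ← zpow_mul,
        hns']
      congr 3; push_cast; ring
    have e3 : (RatFunc.X : RatFunc ℚ) ^ (((n : ℤ) - s) * ((n : ℤ) + s - 3) / 3) =
        (RatFunc.X ^ (3 : ℤ)) ^ ((2 * h + 2) * (2 * h + 2 - 1)) * (RatFunc.X ^ s) ^ (2 * (2 * h + 2)) := by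
      rw [zp, zp, zm, show 2 * h + 2 - 1 = 2 * h + 1 by omega]; congr 1
      rw [ht, mul_assoc, Int.mul_ediv_cancel_left _ (by norm_num), hns']
      push_cast; ring
    rw [e1, e2, e3, one_mul]
    congr 1
    refine Finset.sum_congr rfl fun k _ => ?_
    simp only [hq, inv_one, mul_one]
    have e4 : (RatFunc.X : RatFunc ℚ) ^ (2 * (k : ℤ) * (3 - s)) =
        (RatFunc.X ^ (3 : ℤ)) ^ (2 * k) * ((RatFunc.X ^ s) ^ (2 * k))⁻¹ := by
      rw [zp, zp, ← zpow_neg, zm]; congr 1; push_cast; ring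
    rw [e4, zm, zm, add_comm s 3, add_comm s 6]
    simp only [div_eq_mul_inv, mul_inv]
    ring
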